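/- Let C be a wreath-closed permutation class containing only finitely many simple permutations, let 𝒫 be a finite query-complete set of properties, and let 𝒬 ⊆ 𝒫. Then the generating function of the set of involutions in C that satisfy every property in 𝒬 is algebraic over ℚ[x]. -/

import Mathlib

/-- A permutation of length `n`. -/
abbrev Perm (n : ℕ) := Equiv.Perm (Fin n)

/-- `σ` is contained in `π`: there is a strictly increasing sequence of indices of `π`
on which `π` is order isomorphic to `σ`. -/
def Contains {m n : ℕ} (σ : Perm m) (π : Perm n) : Prop :=
  ∃ f : Fin m → Fin n, StrictMono f ∧ ∀ s t : Fin m, π (f s) < π (f t) ↔ σ s < σ t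

/-- A permutation class: a downset in the containment order. -/
def IsPermClass (C : ∀ n, Set (Perm n)) : Prop :=
  ∀ ⦃m n : ℕ⦄ (σ : Perm m) (π : Perm n), π ∈ C n → Contains σ π → σ ∈ C m

/-- A set of contiguous values. -/
def IsRange {n : ℕ} (I : Finset (Fin n)) : Prop :=
  ∀ ⦃i j l : Fin n⦄, i ∈ I → l ∈ I → i ≤ j → j ≤ l → j ∈ I

/-- An interval of `π`: a set of contiguous indices mapped to a set of contiguous values. -/
def IsPermInterval {n : ℕ} (π : Perm n) (I : Finset (Fin n)) : Prop :=
  IsRange I ∧ IsRange (I.image π)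

/-- A permutation is simple if its only intervals have size `0`, `1`, or `n`. -/
def IsSimple {n : ℕ} (π : Perm n) : Prop :=
  ∀ I : Finset (Fin n), IsPermInterval π I → I.card ≤ 1 ∨ I.card = n

/-- The set of simple permutations belonging to the class `C` is finite. -/
def FinitelyManySimples (C : ∀ n, Set (Perm n)) : Prop :=
  {p : Σ n : ℕ, Perm n | p.2 ∈ C p.1 ∧ IsSimple p.2}.Finite

/-- The generating function `∑_{n ≥ 1} |S_n| xⁿ` of a set of permutations. -/
noncomputable def genFun (S : ∀ n, Set (Perm n)) : PowerSeries ℚ :=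
  PowerSeries.mk fun n => if n = 0 then 0 else (Nat.card (S n) : ℚ)

/-- A power series `f` is algebraic over `ℚ[x]` if there is a nonzero polynomial
`P(x,y) ∈ ℚ[x][y]` with `P(x,f) = 0`. -/
def IsAlgebraicOverQx (f : PowerSeries ℚ) : Prop :=
  ∃ P : Polynomial (Polynomial ℚ), P ≠ 0 ∧
    Polynomial.eval₂ Polynomial.coeToPowerSeries.ringHom f P = 0

/-- `π` is the inflation `σ[α 0, …, α (m-1)]` of `σ` by the nonempty permutations
`α i` (of lengths `k i ≥ 1`): `π` has length `∑ i, k i` and its value at position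
`(∑_{t < i} k t) + j` equals `(∑_{t : σ t < σ i} k t) + α i j`. -/
def IsInflation {N m : ℕ} {k : Fin m → ℕ} (σ : Perm m) (α : ∀ i, Perm (k i))
    (π : Perm N) : Prop :=
  (∀ i, 0 < k i) ∧ N = ∑ i, k i ∧
    ∀ (i : Fin m) (j : Fin (k i)) (p : Fin N),
      (p : ℕ) = (∑ t ∈ Finset.univ.filter fun t => t < i, k t) + (j : ℕ) →
      (π p : ℕ) = (∑ t ∈ Finset.univ.filter fun t => σ t < σ i, k t) + (α i j : ℕ)

/-- `C` is wreath-closed: any inflation of a member of `C` by members of `C`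
lies in `C`. -/
def WreathClosed (C : ∀ n, Set (Perm n)) : Prop :=
  ∀ ⦃m N : ℕ⦄ (σ : Perm m) (k : Fin m → ℕ) (α : ∀ i, Perm (k i)) (π : Perm N),
    σ ∈ C m → (∀ i, α i ∈ C (k i)) → IsInflation σ α π → π ∈ C N

/-- A set `Ps` of properties (a property is a set of permutations) is query-complete:
whether an inflation `σ[α 0, …, α (m-1)]` satisfies a property `P ∈ Ps` depends only on
`σ` and on which properties of `Ps` each `α i` satisfies. -/
def QueryComplete (Ps : Set (∀ n, Set (Perm n))) : Prop :=
  ∀ ⦃m : ℕ⦄ (σ : Perm m) (k k' : Fin m → ℕ)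
    (α : ∀ i, Perm (k i)) (α' : ∀ i, Perm (k' i)),
    (∀ i : Fin m, ∀ Q ∈ Ps, α i ∈ Q (k i) ↔ α' i ∈ Q (k' i)) →
    ∀ P ∈ Ps, ∀ ⦃N N' : ℕ⦄ (π : Perm N) (π' : Perm N'),
      IsInflation σ α π → IsInflation σ α' π' → (π ∈ P N ↔ π' ∈ P N')

/-!
Group the members of the class by *profile*: the properties of the permutation and of its inverse,
and the `τ ∈ {12, 21}` of which it is an inflation. Let `H v` count the involutions of profile `v`,
and let `G v` count all permutations of profile `v` with their lengths doubled.

Every permutation of length at least two is an inflation `σ[α]` of a unique simple `σ`, and the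
blocks are unique too once, for `σ ∈ {12, 21}`, the first block is required not to be an inflation
of `σ`. By uniqueness, `σ[α]` with `σ ≠ 21` is an involution exactly when `σ` is one and
`α (σ i) = (α i)⁻¹`: a fixed point of `σ` then contributes some `H v`, and a 2-cycle carries two
mutually inverse blocks and contributes some `G v`. The involutions that are skew sums are
`a ⊖ a⁻¹` and `a ⊖ γ ⊖ a⁻¹`, where `a` is skew indecomposable and `γ` is an involution.

Hence, if `J` denotes the elements without constant term of `B = ℚ[x][G, H]`, all the generators
`G v` and `H v` lie in `ℚ[x] + J²`. Let `N` be the `B`-module spanned by their Kähler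
differentials. Then `N ≤ J N`, so by Nakayama's lemma `N` is annihilated by a nonzero element of
`B`. The fraction field of `B` is therefore unramified over `ℚ[x]`, hence algebraic.
-/

section Algebraicity

open KaehlerDifferential

lemma isAlgebraic_of_formallyUnramified {R L : Type*} [CommRing R] [IsDomain R] [Field L]
    [Algebra R L] [FaithfulSMul R L] [Algebra.EssFiniteType R L]
    [Algebra.FormallyUnramified R L] : Algebra.IsAlgebraic R L := by
  let K := FractionRing R
  let _ : Algebra K L := FractionRing.liftAlgebra R L
  have : IsScalarTower R K L := FractionRing.isScalarTower_liftAlgebra R L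
  have : Algebra.FormallyUnramified K L := Algebra.FormallyUnramified.of_restrictScalars R K L
  have : Algebra.EssFiniteType K L := Algebra.EssFiniteType.of_comp R K L
  have : Algebra.IsSeparable K L := Algebra.FormallyUnramified.isSeparable K L
  exact (IsFractionRing.comap_isAlgebraic_iff (K := K)).mpr inferInstance

lemma formallyUnramified_of_kaehlerD_algebraMap_eq_zero {R B L : Type*} [CommRing R] [CommRing B]
    [IsDomain B] [Field L] [Algebra R B] [Algebra R L] [Algebra B L] [IsScalarTower R B L]
    [IsFractionRing B L] (h : ∀ b : B, D R L (algebraMap B L b) = 0) :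
    Algebra.FormallyUnramified R L := by
  have hD (x : L) : D R L x = 0 := by
    obtain ⟨a, b, -, rfl⟩ := IsFractionRing.div_surjective (A := B) x
    rw [Derivation.leibniz_div, h a, h b]
    simp
  refine ⟨?_⟩
  rw [← Submodule.subsingleton_iff L, ← subsingleton_iff_bot_eq_top, ← span_range_derivation,
    eq_comm, Submodule.span_eq_bot]
  rintro _ ⟨x, rfl⟩
  exact hD x

section Derivation

variable {R B M : Type*} [CommRing R] [CommRing B] [Algebra R B] [AddCommGroup M] [Module R M]
  [Module B M] (D : Derivation R B M)

lemma derivation_mem_span_image_of_mem_adjoin {s : Set B} {b : B}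
    (hb : b ∈ Algebra.adjoin R s) : D b ∈ Submodule.span B (D '' s) := by
  induction hb using Algebra.adjoin_induction with
  | mem x hx => exact Submodule.subset_span ⟨x, hx, rfl⟩
  | algebraMap r => simp
  | add x y _ _ hx hy => rw [map_add]; exact add_mem hx hy
  | mul x y _ _ hx hy =>
    rw [Derivation.leibniz]
    exact add_mem (Submodule.smul_mem _ _ hy) (Submodule.smul_mem _ _ hx)

lemma derivation_mem_smul_of_mem_mul {I : Ideal B} {N : Submodule B M} (hN : ∀ b, D b ∈ N)
    {y : B} (hy : y ∈ I * I) : D y ∈ I • N := by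
  induction hy using Submodule.mul_induction_on' with
  | mem_mul_mem a ha b hb =>
    rw [Derivation.leibniz]
    exact add_mem (Submodule.smul_mem_smul ha (hN b)) (Submodule.smul_mem_smul hb (hN a))
  | add x _ y _ hx hy => rw [map_add]; exact add_mem hx hy

lemma derivation_eq_zero_of_mem_one_sup_mul [IsDomain B] [Module.IsTorsionFree B M] {s : Set B}
    (hfin : s.Finite) (hs : Algebra.adjoin R s = ⊤) {I : Ideal B} (hI : I ≠ ⊤)
    (h : ∀ x ∈ s, x ∈ (1 : Submodule R B) ⊔ (I * I).restrictScalars R) (b : B) : D b = 0 := by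
  set N := Submodule.span B (D '' s)
  have hN (b : B) : D b ∈ N :=
    derivation_mem_span_image_of_mem_adjoin D (hs ▸ Algebra.mem_top)
  have hle : N ≤ I • N := by
    refine Submodule.span_le.mpr ?_
    rintro _ ⟨x, hx, rfl⟩
    obtain ⟨p, hp, y, hy, rfl⟩ := Submodule.mem_sup.mp (h x hx)
    obtain ⟨r, rfl⟩ := Submodule.mem_one.mp hp
    simpa using derivation_mem_smul_of_mem_mul D hN hy
  obtain ⟨r, hr, hrN⟩ := Submodule.exists_sub_one_mem_and_smul_eq_zero_of_fg_of_le_smul I N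
    (Submodule.fg_span (hfin.image D)) hle
  have hr0 : r ≠ 0 := by
    rintro rfl
    exact hI (I.eq_top_iff_one.mpr (by simpa using I.neg_mem hr))
  exact (smul_eq_zero.mp (hrN (D b) (hN b))).resolve_left hr0

end Derivation

theorem isAlgebraic_of_adjoin_eq_top {R B : Type*} [CommRing R] [IsDomain R] [CommRing B]
    [IsDomain B] [Algebra R B] [FaithfulSMul R B] {s : Set B} (hfin : s.Finite)
    (hs : Algebra.adjoin R s = ⊤) {I : Ideal B} (hI : I ≠ ⊤)
    (h : ∀ x ∈ s, x ∈ (1 : Submodule R B) ⊔ (I * I).restrictScalars R) :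
    Algebra.IsAlgebraic R B := by
  let L := FractionRing B
  have : Algebra.FiniteType R B := ⟨⟨hfin.toFinset, by simpa using hs⟩⟩
  have : Algebra.EssFiniteType B L := Algebra.EssFiniteType.of_isLocalization L (nonZeroDivisors B)
  have : Algebra.EssFiniteType R L := Algebra.EssFiniteType.comp R B L
  have : Module.IsTorsionFree B (Ω[L⁄R]) := .trans_faithfulSMul B L _
  have : Algebra.FormallyUnramified R L := formallyUnramified_of_kaehlerD_algebraMap_eq_zero
    fun b : B => derivation_eq_zero_of_mem_one_sup_mul ((D R L).compAlgebraMap B) hfin hs hI h b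
  have hRL : Algebra.IsAlgebraic R L := isAlgebraic_of_formallyUnramified
  exact ⟨fun b => (isAlgebraic_algebraMap_iff
    (FaithfulSMul.algebraMap_injective B L)).mp (hRL.isAlgebraic (algebraMap B L b))⟩

/-- The elements of the subalgebra generated by `s` that lie in the ideal `I`. -/
def adjoinInf (R : Type*) {S : Type*} [CommRing R] [CommRing S] [Algebra R S] (s : Set S)
    (I : Ideal S) : Submodule R S :=
  Subalgebra.toSubmodule (Algebra.adjoin R s) ⊓ I.restrictScalars R

lemma adjoinInf_mul_le {R S : Type*} [CommRing R] [CommRing S] [Algebra R S] (s : Set S)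
    (I : Ideal S) : adjoinInf R s I * adjoinInf R s I ≤ adjoinInf R s I :=
  Submodule.mul_le.mpr fun _ hx _ hy =>
    ⟨(Algebra.adjoin R s).mul_mem hx.1 hy.1, I.mul_mem_left _ hy.2⟩

theorem isAlgebraic_of_mem_one_sup_adjoinInf_mul {R S : Type*} [CommRing R] [IsDomain R]
    [CommRing S] [IsDomain S] [Algebra R S] [FaithfulSMul R S] {s : Set S} (hfin : s.Finite)
    {I : Ideal S} (hI : I ≠ ⊤) (h : ∀ x ∈ s, x ∈ 1 ⊔ adjoinInf R s I * adjoinInf R s I) {x : S}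
    (hx : x ∈ s) : IsAlgebraic R x := by
  let B := Algebra.adjoin R s
  let t : Set B := Subtype.val ⁻¹' s
  have hBt : Algebra.adjoin R t = ⊤ := Algebra.adjoin_adjoin_coe_preimage
  have hlift {y : S} (hy : y ∈ adjoinInf R s I * adjoinInf R s I) :
      ∃ z ∈ I.comap B.val * I.comap B.val, (z : S) = y := by
    induction hy using Submodule.mul_induction_on' with
    | mem_mul_mem a ha b hb =>
      exact ⟨⟨a, ha.1⟩ * ⟨b, hb.1⟩, Ideal.mul_mem_mul ha.2 hb.2, rfl⟩
    | add x _ y _ hx hy =>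
      obtain ⟨a, ha, rfl⟩ := hx
      obtain ⟨b, hb, rfl⟩ := hy
      exact ⟨a + b, add_mem ha hb, rfl⟩
  have halg : Algebra.IsAlgebraic R B := by
    refine isAlgebraic_of_adjoin_eq_top (s := t) (hfin.preimage Subtype.val_injective.injOn)
      hBt (I := I.comap B.val) (Ideal.comap_ne_top _ hI) fun y hy => ?_
    obtain ⟨p, hp, q, hq, hpq⟩ := Submodule.mem_sup.mp (h y hy)
    obtain ⟨r, rfl⟩ := Submodule.mem_one.mp hp
    obtain ⟨z, hz, rfl⟩ := hlift hq
    exact Submodule.mem_sup.mpr ⟨algebraMap R B r, Submodule.mem_one.mpr ⟨r, rfl⟩, z, hz,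
      Subtype.ext hpq⟩
  exact (isAlgebraic_algebraMap_iff (A := S) (a := (⟨x, Algebra.subset_adjoin hx⟩ : B))
    Subtype.val_injective).mpr (halg.isAlgebraic _)

end Algebraicity

section GeneratingFunctions

open PowerSeries

variable {R α β : Type*}

/-- The generating function `∑ₙ |{a ∈ S | s a = n}| Xⁿ` of the set `S` with respect to the size
function `s`. It is meaningful when these sets are finite, as `Set.ncard` vanishes on infinite
sets. -/
noncomputable def sizeGF (R : Type*) [Semiring R] (s : α → ℕ) (S : Set α) : R⟦X⟧ :=
  PowerSeries.mk fun n => ({a ∈ S | s a = n}.ncard : R)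

section Semiring

variable [Semiring R] {s : α → ℕ} {t : β → ℕ} {S T : Set α}

lemma coeff_sizeGF (n : ℕ) : coeff n (sizeGF R s S) = ({a ∈ S | s a = n}.ncard : R) := by
  simp only [sizeGF, coeff_mk]

lemma sizeGF_empty : sizeGF R s ∅ = 0 := by
  ext n
  simp [coeff_sizeGF]

lemma sizeGF_image {f : α → β} (hf : S.InjOn f) (hs : ∀ a ∈ S, t (f a) = s a) :
    sizeGF R t (f '' S) = sizeGF R s S := by
  ext n
  have : {b ∈ f '' S | t b = n} = f '' {a ∈ S | s a = n} := by grind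
  rw [coeff_sizeGF, coeff_sizeGF, this, (hf.mono (Set.sep_subset _ _)).ncard_image]

lemma sizeGF_inter_add_diff (hs : ∀ n, (s ⁻¹' {n}).Finite) :
    sizeGF R s (S ∩ T) + sizeGF R s (S \ T) = sizeGF R s S := by
  ext n
  have hinter : {a ∈ S ∩ T | s a = n} = {a ∈ S | s a = n} ∩ T :=
    Set.ext fun a => and_right_comm
  have hdiff : {a ∈ S \ T | s a = n} = {a ∈ S | s a = n} \ T :=
    Set.ext fun a => and_right_comm
  have hfin : {a ∈ S | s a = n}.Finite := (hs n).subset fun a ha => ha.2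
  rw [map_add, coeff_sizeGF, coeff_sizeGF, coeff_sizeGF, hinter, hdiff, ← Nat.cast_add,
    Set.ncard_inter_add_ncard_sdiff_eq_ncard _ T hfin]

lemma sizeGF_iUnion [Fintype β] (hs : ∀ n, (s ⁻¹' {n}).Finite) {T : β → Set α}
    (hT : Pairwise (Function.onFun Disjoint T)) :
    sizeGF R s (⋃ b, T b) = ∑ b, sizeGF R s (T b) := by
  ext n
  have hunion : {a ∈ ⋃ b, T b | s a = n} = ⋃ b, {a ∈ T b | s a = n} := by
    ext a
    simp
  simp only [map_sum, coeff_sizeGF]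
  rw [hunion, Set.ncard_iUnion_of_finite (s := fun b => {a ∈ T b | s a = n})
    (fun b => (hs n).subset fun a ha => ha.2)
    fun b c hbc => (hT hbc).mono (Set.sep_subset _ _) (Set.sep_subset _ _),
    finsum_eq_sum_of_fintype, Nat.cast_sum]

lemma sizeGF_mem_of_inter_diff {Z : AddSubmonoid R⟦X⟧} (hs : ∀ n, (s ⁻¹' {n}).Finite)
    (T : Set α) (hinter : sizeGF R s (S ∩ T) ∈ Z) (hdiff : sizeGF R s (S \ T) ∈ Z) :
    sizeGF R s S ∈ Z :=
  sizeGF_inter_add_diff (R := R) (S := S) (T := T) hs ▸ add_mem hinter hdiff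

lemma sizeGF_mem_of_cover {Z : AddSubmonoid R⟦X⟧} [Finite β] (hs : ∀ n, (s ⁻¹' {n}).Finite)
    {T : β → Set α} (hT : Pairwise (Function.onFun Disjoint T)) (hST : S ⊆ ⋃ b, T b)
    (h : ∀ b, ∀ a ∈ S ∩ T b, sizeGF R s (S ∩ T b) ∈ Z) : sizeGF R s S ∈ Z := by
  have := Fintype.ofFinite β
  rw [← Set.inter_eq_left.mpr hST, Set.inter_iUnion, sizeGF_iUnion hs
    fun b c hbc => (hT hbc).mono Set.inter_subset_right Set.inter_subset_right]
  refine sum_mem fun b _ => ?_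
  rcases (S ∩ T b).eq_empty_or_nonempty with hb | ⟨a, ha⟩
  · simp [hb, sizeGF_empty]
  · exact h b a ha

lemma constantCoeff_sizeGF (hs : ∀ a ∈ S, s a ≠ 0) : constantCoeff (sizeGF R s S) = 0 := by
  have : {a ∈ S | s a = 0} = ∅ := by grind
  rw [← coeff_zero_eq_constantCoeff_apply, coeff_sizeGF, this]
  simp

end Semiring

section CommSemiring

variable [CommSemiring R] {s : α → ℕ} {t : β → ℕ} {S : Set α} {T : Set β}

lemma sizeGF_mem_one_of_finite (hS : S.Finite) :
    sizeGF R s S ∈ (1 : Submodule (Polynomial R) R⟦X⟧) := by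
  have key : sizeGF R s S = ∑ a ∈ hS.toFinset, X ^ s a := by
    ext n
    rw [coeff_sizeGF, map_sum]
    simp only [coeff_X_pow, Finset.sum_boole]
    rw [Set.ncard_eq_toFinset_card _ (hS.subset (Set.sep_subset _ _))]
    congr 2
    ext a
    simp [eq_comm]
  rw [key]
  exact Submodule.mem_one.mpr ⟨∑ a ∈ hS.toFinset, Polynomial.X ^ s a, by
    simp [PowerSeries.algebraMap_apply']⟩

lemma sizeGF_prod (hs : ∀ n, (s ⁻¹' {n}).Finite) (ht : ∀ n, (t ⁻¹' {n}).Finite) :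
    sizeGF R (fun x : α × β => s x.1 + t x.2) (S ×ˢ T) = sizeGF R s S * sizeGF R t T := by
  ext n
  have hunion : {x ∈ S ×ˢ T | s x.1 + t x.2 = n} =
      ⋃ l ∈ SetLike.coe (Finset.HasAntidiagonal.antidiagonal n),
        {a ∈ S | s a = l.1} ×ˢ {b ∈ T | t b = l.2} := by
    ext x
    simp only [Set.mem_ofPred_eq, Set.mem_prod, SetLike.mem_coe,
      Finset.HasAntidiagonal.mem_antidiagonal, Set.mem_iUnion, exists_prop, Prod.exists]
    grind
  rw [coeff_sizeGF, hunion, Set.Finite.ncard_biUnion (Finset.finite_toSet _),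
    finsum_mem_coe_finset, coeff_mul]
  · push_cast [Set.ncard_prod, coeff_sizeGF]
    rfl
  · exact fun l _ => ((hs _).subset fun a ha => ha.2).prod ((ht _).subset fun b hb => hb.2)
  · exact fun l _ l' _ hl => Set.disjoint_left.mpr fun x hx hx' =>
      hl (Prod.ext (hx.1.2.symm.trans hx'.1.2) (hx.2.2.symm.trans hx'.2.2))

lemma sizeGF_pi {ι : Type*} [Fintype ι] {A : ι → Type*} {s : ∀ i, A i → ℕ}
    (hs : ∀ i n, (s i ⁻¹' {n}).Finite) (S : ∀ i, Set (A i)) :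
    sizeGF R (fun x : ∀ i, A i => ∑ i, s i (x i)) (Set.univ.pi S) =
      ∏ i, sizeGF R (s i) (S i) := by
  classical
  ext n
  have hunion : {x ∈ Set.univ.pi S | ∑ i, s i (x i) = n} =
      ⋃ l ∈ SetLike.coe (Finset.univ.finsuppAntidiag n),
        Set.univ.pi fun i => {a ∈ S i | s i a = l i} := by
    ext x
    simp only [Set.mem_iUnion, Set.mem_pi, Set.mem_univ, forall_const, Set.mem_ofPred_eq,
      SetLike.mem_coe, Finset.mem_finsuppAntidiag, exists_prop, forall_and]
    constructor
    · exact fun hx => ⟨Finsupp.equivFunOnFinite.symm fun i => s i (x i), by simpa using hx.2,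
        hx.1, fun i => rfl⟩
    · exact fun ⟨l, hl, hS, hs⟩ => ⟨hS, (Finset.sum_congr rfl fun i _ => hs i).trans hl.1⟩
  rw [coeff_sizeGF, hunion, Set.Finite.ncard_biUnion (Finset.finite_toSet _),
    finsum_mem_coe_finset, coeff_prod]
  · simp_rw [coeff_sizeGF, ← Nat.cast_prod, ← Nat.cast_sum]
    exact congrArg _ (Finset.sum_congr rfl fun l _ =>
      (Nat.card_congr (Equiv.Set.univPi _)).trans (Nat.card_pi ..))
  · exact fun l _ => Set.Finite.pi fun i => (hs i _).subset fun a ha => ha.2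
  · exact fun l _ l' _ hl => Set.disjoint_left.mpr fun x hx hx' =>
      hl (Finsupp.ext fun i => (hx i trivial).2.symm.trans (hx' i trivial).2)

end CommSemiring

lemma prod_mem_mul_self {R S ι : Type*} [CommSemiring R] [CommSemiring S] [Algebra R S]
    {J : Submodule R S} (hJ : J * J ≤ J) [Fintype ι] [Nontrivial ι] {f : ι → S}
    (hf : ∀ i, f i ∈ J) : ∏ i, f i ∈ J * J := by
  classical
  obtain ⟨i, j, hij⟩ := exists_pair_ne ι
  rw [← Finset.mul_prod_erase _ _ (Finset.mem_univ i)]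
  refine Submodule.mul_mem_mul (hf i) (Finset.prod_induction_nonempty f (· ∈ J)
    (fun a b ha hb => hJ (Submodule.mul_mem_mul ha hb)) ⟨j, ?_⟩ fun i _ => hf i)
  simpa using hij.symm

end GeneratingFunctions

section Standardization

/-- A permutation of any length. -/
abbrev AnyPerm := Σ n, Perm n

instance : InvolutiveInv AnyPerm where
  inv p := ⟨p.1, p.2⁻¹⟩
  inv_inv p := Sigma.ext rfl (heq_of_eq (inv_inv p.2))

variable {X Y L₁ L₂ M₁ M₂ : Type*} [LinearOrder L₁] [LinearOrder L₂] [LinearOrder M₁]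
  [LinearOrder M₂] {u : X → L₁} {v : X → L₂} {u' : Y → M₁} {v' : Y → M₂} {p p' : AnyPerm}

/-- `p` is order isomorphic to the set of points with positions `u` and values `v`. -/
def IsStandardization (p : AnyPerm) (u : X → L₁) (v : X → L₂) : Prop :=
  ∃ e : Fin p.1 ≃ X, (∀ i j, u (e i) < u (e j) ↔ i < j) ∧
    ∀ i j, v (e i) < v (e j) ↔ p.2 i < p.2 j

lemma lt_iff_lt_of_imp_of_injective (hu : u.Injective) {w : X → L₂}
    (h : ∀ x y, u x < u y → w x < w y) (x y : X) : w x < w y ↔ u x < u y := by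
  refine ⟨fun hw => ?_, h x y⟩
  rcases lt_trichotomy (u x) (u y) with hxy | hxy | hxy
  · exact hxy
  · exact absurd hw (by rw [hu hxy]; exact lt_irrefl _)
  · exact absurd hw (h y x hxy).asymm

lemma equivFin_unique {n : ℕ} {e e' : Fin n ≃ X} (h : StrictMono (u ∘ e))
    (h' : StrictMono (u ∘ e')) : e = e' := by
  have hrange : Set.range (u ∘ e) = Set.range (u ∘ e') := by
    rw [e.surjective.range_comp, e'.surjective.range_comp]
  have hu : u.Injective := by
    simpa [Function.comp_assoc] using h.injective.comp e.symm.injective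
  ext i
  exact hu (congrFun ((StrictMono.range_inj h h').mp hrange) i)

lemma exists_equivFin_strictMono [Finite X] (hu : u.Injective) :
    ∃ e : Fin (Nat.card X) ≃ X, StrictMono (u ∘ e) := by
  let _ : LinearOrder X := LinearOrder.lift' u hu
  have := Fintype.ofFinite X
  let e := Fintype.orderIsoFinOfCardEq X Nat.card_eq_fintype_card.symm
  exact ⟨e.toEquiv, fun i j hij => e.strictMono hij⟩

lemma exists_isStandardization [Finite X] (hu : u.Injective) (hv : v.Injective) :
    ∃ p, IsStandardization p u v := by
  obtain ⟨e, he⟩ := exists_equivFin_strictMono hu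
  obtain ⟨f, hf⟩ := exists_equivFin_strictMono hv
  refine ⟨⟨Nat.card X, e.trans f.symm⟩, e, fun i j => he.lt_iff_lt, fun i j => ?_⟩
  simpa using hf.lt_iff_lt (a := f.symm (e i)) (b := f.symm (e j))

namespace IsStandardization

lemma unique (h : IsStandardization p u v) (h' : IsStandardization p' u v) : p = p' := by
  obtain ⟨n, π⟩ := p
  obtain ⟨n', π'⟩ := p'
  obtain ⟨e, hu, hv⟩ := h
  obtain ⟨e', hu', hv'⟩ := h'
  obtain rfl : n = n' := Fin.equiv_iff_eq.mp ⟨e.trans e'.symm⟩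
  obtain rfl : e = e' :=
    equivFin_unique (u := u) (fun i j => (hu i j).mpr) fun i j => (hu' i j).mpr
  have h : π.symm.trans e = π'.symm.trans e := equivFin_unique (u := v)
    (fun i j hij => (hv _ _).mpr (by simpa using hij))
    fun i j hij => (hv' _ _).mpr (by simpa using hij)
  have hsymm : π.symm = π'.symm := Equiv.ext fun i => e.injective (Equiv.congr_fun h i)
  rw [← π.symm_symm, hsymm, π'.symm_symm]

lemma of_equiv (h : IsStandardization p u v) (g : Y ≃ X)
    (hu : ∀ x y, u (g x) < u (g y) ↔ u' x < u' y)
    (hv : ∀ x y, v (g x) < v (g y) ↔ v' x < v' y) : IsStandardization p u' v' := by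
  obtain ⟨e, heu, hev⟩ := h
  exact ⟨e.trans g.symm, fun i j => by simp [← hu, heu], fun i j => by simp [← hv, hev]⟩

lemma inv (h : IsStandardization p u v) : IsStandardization p⁻¹ v u := by
  obtain ⟨e, hu, hv⟩ := h
  refine ⟨(p.2⁻¹).trans e, fun i j => ?_, fun i j => hu _ _⟩
  simpa [Equiv.Perm.inv_def] using hv (p.2⁻¹ i) (p.2⁻¹ j)

lemma length_eq (h : IsStandardization p u v) : p.1 = Nat.card X := by
  obtain ⟨e, -, -⟩ := h
  simpa using Nat.card_congr e

lemma eq_card_filter_lt [Fintype X] {e : Fin p.1 ≃ X} {f : Fin p.1 → Fin p.1}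
    (hf : f.Bijective) (h : ∀ i j, u (e i) < u (e j) ↔ f i < f j) (i : Fin p.1) :
    (f i : ℕ) = (Finset.univ.filter fun x => u x < u (e i)).card := by
  rw [← Fin.card_Iio]
  refine (Finset.card_bijective (e.symm.trans (Equiv.ofBijective f hf))
    (Equiv.bijective _) fun x => ?_).symm
  simpa using h (e.symm x) i

end IsStandardization

end Standardization

section Inflation

variable {m : ℕ}

/-- The position of the point `x` of an inflation by `α`: the index of its block, then its position
inside the block. -/
def inflationPos (α : Fin m → AnyPerm) (x : Σ i, Fin (α i).1) : Fin m ×ₗ ℕ :=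
  toLex (x.1, (x.2 : ℕ))

/-- The value of the point `x` of the inflation of `σ` by `α`: the value of its block, then its
value inside the block. -/
def inflationVal (σ : Perm m) (α : Fin m → AnyPerm) (x : Σ i, Fin (α i).1) : Fin m ×ₗ ℕ :=
  toLex (σ x.1, ((α x.1).2 x.2 : ℕ))

lemma inflationVal_injective (σ : Perm m) (α : Fin m → AnyPerm) :
    (inflationVal σ α).Injective := by
  rintro ⟨i, a⟩ ⟨j, b⟩ h
  simp only [inflationVal, EmbeddingLike.apply_eq_iff_eq, Prod.mk.injEq] at h
  obtain ⟨rfl, h⟩ := h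
  simpa [Fin.val_inj] using h

lemma inflationPos_injective (α : Fin m → AnyPerm) : (inflationPos α).Injective :=
  inflationVal_injective 1 fun i => ⟨(α i).1, 1⟩

/-- The inflation `σ[α 0, …, α (m-1)]`, with empty blocks allowed. -/
noncomputable def inflate (σ : Perm m) (α : Fin m → AnyPerm) : AnyPerm :=
  (exists_isStandardization (inflationPos_injective α) (inflationVal_injective σ α)).choose

lemma isStandardization_inflate (σ : Perm m) (α : Fin m → AnyPerm) :
    IsStandardization (inflate σ α) (inflationPos α) (inflationVal σ α) :=
  (exists_isStandardization (inflationPos_injective α) (inflationVal_injective σ α)).choose_spec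

lemma length_inflate (σ : Perm m) (α : Fin m → AnyPerm) :
    (inflate σ α).1 = ∑ i, (α i).1 := by
  rw [(isStandardization_inflate σ α).length_eq, Nat.card_eq_fintype_card, Fintype.card_sigma]
  simp

lemma inv_inflate (σ : Perm m) (α : Fin m → AnyPerm) :
    (inflate σ α)⁻¹ = inflate σ⁻¹ fun i => (α (σ⁻¹ i))⁻¹ := by
  let g : (Σ i, Fin ((α (σ⁻¹ i))⁻¹).1) ≃ Σ i, Fin (α i).1 :=
    (Equiv.sigmaCongrRight fun i => ((α (σ⁻¹ i)).2⁻¹ : Perm _)).trans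
      (Equiv.sigmaCongrLeft (β := fun i => Fin (α i).1) σ⁻¹)
  have hpos (x) : inflationVal σ α (g x) = inflationPos (fun i => (α (σ⁻¹ i))⁻¹) x :=
    congrArg toLex (Prod.ext (σ.apply_symm_apply x.1)
      (congrArg Fin.val ((α (σ⁻¹ x.1)).2.apply_symm_apply x.2)))
  have hval (x) : inflationPos α (g x) = inflationVal σ⁻¹ (fun i => (α (σ⁻¹ i))⁻¹) x := rfl
  exact ((isStandardization_inflate σ α).inv.of_equiv g (fun x y => by rw [hpos, hpos])
    fun x y => by rw [hval, hval]).unique (isStandardization_inflate _ _)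

lemma card_inflationVal_lt (σ : Perm m) (α : Fin m → AnyPerm) (i : Fin m) (j : Fin (α i).1) :
    (Finset.univ.filter fun x => inflationVal σ α x < inflationVal σ α ⟨i, j⟩).card
      = (∑ t ∈ Finset.univ.filter fun t => σ t < σ i, (α t).1) + ((α i).2 j : ℕ) := by
  have hsigma : (Finset.univ.filter fun x => inflationVal σ α x < inflationVal σ α ⟨i, j⟩) =
      Finset.univ.sigma fun t => Finset.univ.filter fun s : Fin (α t).1 =>
        inflationVal σ α ⟨t, s⟩ < inflationVal σ α ⟨i, j⟩ := by
    ext x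
    simp
  have hblock : (Finset.univ.filter fun s => (α i).2 s < (α i).2 j).card = ((α i).2 j : ℕ) := by
    rw [← Fin.card_Iio]
    exact Finset.card_bijective (α i).2 (α i).2.bijective fun s => by simp
  rw [hsigma, Finset.card_sigma, Finset.sum_filter,
    ← Finset.sum_erase_add _ _ (Finset.mem_univ i),
    ← Finset.sum_erase_add (a := i) _ (fun t => if σ t < σ i then (α t).1 else 0)
      (Finset.mem_univ i)]
  simp only [lt_irrefl, if_false, add_zero]
  congr 1
  · refine Finset.sum_congr rfl fun t ht => ?_
    have hne : σ t ≠ σ i := by simpa using (Finset.mem_erase.mp ht).1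
    simp only [inflationVal, Prod.Lex.toLex_lt_toLex, hne, false_and, or_false]
    split_ifs with h <;> simp [h]
  · simpa only [inflationVal, Prod.Lex.toLex_lt_toLex, lt_irrefl, false_or, true_and,
      Fin.val_fin_lt] using hblock

lemma card_inflationPos_lt (α : Fin m → AnyPerm) (i : Fin m) (j : Fin (α i).1) :
    (Finset.univ.filter fun x => inflationPos α x < inflationPos α ⟨i, j⟩).card
      = (∑ t ∈ Finset.univ.filter fun t => t < i, (α t).1) + (j : ℕ) :=
  card_inflationVal_lt 1 (fun i => ⟨(α i).1, 1⟩) i j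

lemma isInflation_inflate (σ : Perm m) (α : Fin m → AnyPerm) (h : ∀ i, 0 < (α i).1) :
    IsInflation σ (fun i => (α i).2) (inflate σ α).2 := by
  refine ⟨h, length_inflate σ α, fun i j p hp => ?_⟩
  obtain ⟨e, hu, hv⟩ := isStandardization_inflate σ α
  have hpos := IsStandardization.eq_card_filter_lt Function.bijective_id hu
  have hval := IsStandardization.eq_card_filter_lt (inflate σ α).2.bijective hv
  obtain ⟨k, hk⟩ := e.surjective ⟨i, j⟩
  obtain rfl : p = k := by
    rw [← Fin.val_inj, hp, ← card_inflationPos_lt, ← hk]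
    exact (hpos k).symm
  rw [hval, hk, card_inflationVal_lt]

end Inflation

section Pattern

variable {N m : ℕ} {π : Perm N} {S : Set (Fin N)} {σ : Perm m}

lemma exists_isStandardization_restrict (π : Perm N) (S : Set (Fin N)) :
    ∃ p, IsStandardization p (fun x : S => x.1) fun x : S => π x :=
  exists_isStandardization Subtype.val_injective (π.injective.comp Subtype.val_injective)

/-- The permutation order isomorphic to the points of `π` with positions in `S`. -/
noncomputable def pattern (π : Perm N) (S : Set (Fin N)) : AnyPerm :=
  (exists_isStandardization_restrict π S).choose

lemma isStandardization_pattern (π : Perm N) (S : Set (Fin N)) :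
    IsStandardization (pattern π S) (fun x : S => x.1) fun x : S => π x :=
  (exists_isStandardization_restrict π S).choose_spec

lemma length_pattern (π : Perm N) (S : Set (Fin N)) : (pattern π S).1 = Nat.card S :=
  (isStandardization_pattern π S).length_eq

lemma length_pattern_pos (h : S.Nonempty) : 0 < (pattern π S).1 := by
  rw [length_pattern]
  have := h.to_subtype
  exact Nat.card_pos

lemma pattern_univ (π : Perm N) : pattern π Set.univ = ⟨N, π⟩ :=
  (isStandardization_pattern π Set.univ).unique
    ⟨(Equiv.Set.univ (Fin N)).symm, by simp, by simp⟩

lemma pattern_eq_inflate {q : Fin N → Fin m} (hpos : ∀ x ∈ S, ∀ y ∈ S, q x < q y → x < y)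
    (hval : ∀ x ∈ S, ∀ y ∈ S, σ (q x) < σ (q y) → π x < π y) :
    pattern π S = inflate σ fun i => pattern π (S ∩ q ⁻¹' {i}) := by
  choose e heu hev using fun i => isStandardization_pattern π (S ∩ q ⁻¹' {i})
  let g : (Σ i, Fin (pattern π (S ∩ q ⁻¹' {i})).1) ≃ S :=
    (Equiv.sigmaCongrRight e).trans
      { toFun := fun x => ⟨x.2.1, x.2.2.1⟩
        invFun := fun x => ⟨q x, ⟨x, x.2, rfl⟩⟩
        left_inv := by
          rintro ⟨i, ⟨x, hx, rfl⟩⟩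
          rfl
        right_inv := fun x => rfl }
  have hq (x) : q (g x) = x.1 := (e x.1 x.2).2.2
  refine IsStandardization.unique ((isStandardization_pattern π S).of_equiv g
    (lt_iff_lt_of_imp_of_injective (inflationPos_injective _) ?_)
    (lt_iff_lt_of_imp_of_injective (inflationVal_injective σ _) ?_)) (isStandardization_inflate _ _)
  · rintro ⟨i, a⟩ ⟨j, b⟩ h
    rcases Prod.Lex.toLex_lt_toLex.mp h with hij | ⟨hij, hab⟩
    · exact hpos _ (g _).2 _ (g _).2 (by rwa [hq, hq])
    · obtain rfl : i = j := hij
      exact (heu i a b).mpr hab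
  · rintro ⟨i, a⟩ ⟨j, b⟩ h
    rcases Prod.Lex.toLex_lt_toLex.mp h with hij | ⟨hij, hab⟩
    · exact hval _ (g _).2 _ (g _).2 (by rwa [hq, hq])
    · obtain rfl : i = j := σ.injective hij
      exact (hev i a b).mpr hab

end Pattern

section Quotient

/-- `q` sends every point of `π` to the point of `σ` whose block contains it, in a description of
`π` as an inflation of `σ` by nonempty permutations. -/
structure IsQuotient {N m : ℕ} (π : Perm N) (σ : Perm m) (q : Fin N → Fin m) : Prop where
  surjective : q.Surjective
  lt_of_lt : ∀ {x y}, q x < q y → x < y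
  val_lt_of_lt : ∀ {x y}, σ (q x) < σ (q y) → π x < π y

variable {N m m' n : ℕ} {π : Perm N} {σ : Perm m} {q : Fin N → Fin m} {σ' : Perm m'}
  {q' : Fin N → Fin m'}

lemma sigma_eq_of_monotone_of_ker_eq {α : Type*} [LinearOrder α] {f : α → Fin m}
    {g : α → Fin m'} (hf : Monotone f) (hg : Monotone g) (hf' : f.Surjective)
    (hg' : g.Surjective) (h : ∀ x y, f x = f y ↔ g x = g y) :
    (⟨m, f⟩ : Σ n, α → Fin n) = ⟨m', g⟩ := by
  obtain rfl : m = m' := by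
    have hker : Setoid.ker f = Setoid.ker g := Setoid.ext h
    exact Fin.equiv_iff_eq.mp ⟨(Setoid.quotientKerEquivOfSurjective f hf').symm.trans
      (hker ▸ Setoid.quotientKerEquivOfSurjective g hg')⟩
  let r : Fin m → Fin m := g ∘ Function.surjInv hf'
  have hr (x) : r (f x) = g x := (h _ _).mp (Function.surjInv_eq hf' (f x))
  have hmono : StrictMono r := fun i j hij => by
    obtain ⟨x, rfl⟩ := hf' i
    obtain ⟨y, rfl⟩ := hf' j
    rw [hr, hr]
    exact (hg (hf.reflect_lt hij).le).lt_of_ne fun hxy => hij.ne ((h x y).mpr hxy)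
  have hsurj : r.Surjective := fun i => (hg' i).imp' f fun x hx => (hr x).trans hx
  have hid : r = id := (hmono.range_inj strictMono_id).mp (by rw [hsurj.range_eq, Set.range_id])
  obtain rfl : f = g := funext fun x => by simpa [hid] using hr x
  rfl

namespace IsQuotient

lemma refl (π : Perm N) : IsQuotient π π id := ⟨Function.surjective_id, id, id⟩

lemma trans {τ : Perm n} {r : Fin m → Fin n} (h : IsQuotient π σ q) (h' : IsQuotient σ τ r) :
    IsQuotient π τ (r ∘ q) :=
  ⟨h'.surjective.comp h.surjective, h.lt_of_lt ∘ h'.lt_of_lt, h.val_lt_of_lt ∘ h'.val_lt_of_lt⟩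

lemma inv (h : IsQuotient π σ q) : IsQuotient π⁻¹ σ⁻¹ (σ ∘ q ∘ ⇑π⁻¹) where
  surjective := σ.surjective.comp (h.surjective.comp (π⁻¹).surjective)
  lt_of_lt hxy := by simpa using h.val_lt_of_lt hxy
  val_lt_of_lt hxy := h.lt_of_lt (by simpa using hxy)

lemma monotone (h : IsQuotient π σ q) : Monotone q := fun _ _ hxy =>
  le_of_not_gt fun hlt => hxy.not_gt (h.lt_of_lt hlt)

lemma eq_of_ker_eq (h : IsQuotient π σ q) (h' : IsQuotient π σ' q')
    (hker : ∀ x y, q x = q y ↔ q' x = q' y) :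
    (⟨m, σ, q⟩ : Σ n, Perm n × (Fin N → Fin n)) = ⟨m', σ', q'⟩ := by
  cases sigma_eq_of_monotone_of_ker_eq h.monotone h'.monotone h.surjective h'.surjective hker
  have hval := eq_of_heq (Sigma.ext_iff.mp <| sigma_eq_of_monotone_of_ker_eq h.inv.monotone
    h'.inv.monotone h.inv.surjective h'.inv.surjective fun x y => by simp).2
  obtain rfl : σ = σ' := DFunLike.coe_injective
    ((h.surjective.comp (π⁻¹).surjective).injective_comp_right hval)
  rfl

lemma eq_inflate (h : IsQuotient π σ q) :
    (⟨N, π⟩ : AnyPerm) = inflate σ fun i => pattern π (q ⁻¹' {i}) := by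
  rw [← pattern_univ, pattern_eq_inflate (fun _ _ _ _ => h.lt_of_lt)
    fun _ _ _ _ => h.val_lt_of_lt]
  simp only [Set.univ_inter]

end IsQuotient

lemma exists_isQuotient_of_eq_inflate {p : AnyPerm} {α : Fin m → AnyPerm}
    (hp : p = inflate σ α) (hα : ∀ i, 0 < (α i).1) :
    ∃ q, IsQuotient p.2 σ q ∧ ∀ i, pattern p.2 (q ⁻¹' {i}) = α i := by
  subst hp
  obtain ⟨e, heu, hev⟩ := isStandardization_inflate σ α
  refine ⟨fun x => (e x).1, ⟨fun i => ⟨e.symm ⟨i, ⟨0, hα i⟩⟩, by simp⟩, fun {x y} hxy => ?_,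
    fun {x y} hxy => ?_⟩, fun i => ?_⟩
  · exact (heu x y).mp (Prod.Lex.toLex_lt_toLex.mpr (Or.inl hxy))
  · exact (hev x y).mp (Prod.Lex.toLex_lt_toLex.mpr (Or.inl hxy))
  · let g : Fin (α i).1 ≃ (fun x => (e x).1) ⁻¹' {i} :=
      (Equiv.sigmaSubtype i).symm.trans (e.symm.subtypeEquiv fun x => by simp)
    have hg (a) : e (g a) = ⟨i, a⟩ := e.apply_symm_apply _
    refine ((isStandardization_pattern _ _).of_equiv g (fun a b => ?_) fun a b => ?_).unique
      (u := id) (v := (α i).2) ⟨Equiv.refl _, fun _ _ => Iff.rfl, fun _ _ => Iff.rfl⟩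
    · rw [← heu, hg, hg]
      simp [inflationPos, Prod.Lex.toLex_lt_toLex]
    · rw [← hev, hg, hg]
      simp [inflationVal, Prod.Lex.toLex_lt_toLex]

end Quotient

section Block

/-- `K` is an interval of `π`, in the form of a set of positions. -/
structure IsBlock {n : ℕ} (π : Perm n) (K : Set (Fin n)) : Prop where
  ordConnected : K.OrdConnected
  ordConnected_image : (π '' K).OrdConnected

variable {n : ℕ} {π : Perm n} {K : Set (Fin n)}

lemma isRange_iff_ordConnected {I : Finset (Fin n)} :
    IsRange I ↔ (I : Set (Fin n)).OrdConnected :=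
  ⟨fun h => ⟨fun _ hx _ hz _ hy => h hx hz hy.1 hy.2⟩,
    fun h _ _ _ hx hz hxy hyz => h.out hx hz ⟨hxy, hyz⟩⟩

lemma isPermInterval_iff_isBlock {I : Finset (Fin n)} :
    IsPermInterval π I ↔ IsBlock π (I : Set (Fin n)) := by
  rw [IsPermInterval, isRange_iff_ordConnected, isRange_iff_ordConnected, Finset.coe_image]
  exact ⟨fun h => ⟨h.1, h.2⟩, fun h => ⟨h.1, h.2⟩⟩

lemma IsBlock.inv (h : IsBlock π K) : IsBlock π⁻¹ (π '' K) :=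
  ⟨h.2, by simpa [Set.image_image] using h.1⟩

lemma isSimple_iff_isBlock : IsSimple π ↔ ∀ K, IsBlock π K → K.Subsingleton ∨ K = Set.univ := by
  classical
  have hcard (I : Finset (Fin n)) : (I.card ≤ 1 ∨ I.card = n) ↔
      ((I : Set (Fin n)).Subsingleton ∨ (I : Set (Fin n)) = Set.univ) := by
    rw [Finset.card_le_one_iff_subsingleton, Finset.coe_eq_univ, ← Finset.card_eq_iff_eq_univ,
      Fintype.card_fin]
  constructor
  · intro h K hK
    simpa using (hcard K.toFinset).mp (h _ (isPermInterval_iff_isBlock.mpr (by simpa using hK)))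
  · exact fun h I hI => (hcard I).mpr (h _ (isPermInterval_iff_isBlock.mp hI))

lemma IsSimple.inv (h : IsSimple π) : IsSimple π⁻¹ := by
  rw [isSimple_iff_isBlock] at h ⊢
  intro K hK
  have himage : π '' (⇑π⁻¹ '' K) = K := by simp [Set.image_image]
  refine (h (⇑π⁻¹ '' K) (by simpa using hK.inv)).imp (fun hs => ?_) fun hu => ?_
  · exact himage ▸ hs.image π
  · rw [← himage, hu, Set.image_univ_of_surjective π.surjective]

lemma isSimple_two (τ : Perm 2) : IsSimple τ := fun I _ => by
  have := card_finset_fin_le I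
  omega

lemma ordConnected_compl_singleton {α : Type*} [LinearOrder α] {a : α}
    (h : IsBot a ∨ IsTop a) : ({a}ᶜ : Set α).OrdConnected := by
  rcases h with h | h
  · rw [← Set.Iic_eq_singleton_iff_isBot.mpr h, Set.compl_Iic]
    exact Set.ordConnected_Ioi
  · rw [← Set.Ici_eq_singleton_iff_isTop.mpr h, Set.compl_Ici]
    exact Set.ordConnected_Iio

lemma IsSimple.not_extreme (h : IsSimple π) (hn : 3 ≤ n) {i : Fin n} (hi : IsBot i ∨ IsTop i) :
    ¬ (IsBot (π i) ∨ IsTop (π i)) := by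
  intro hπ
  have hblock : IsBlock π {i}ᶜ := ⟨ordConnected_compl_singleton hi, by
    rw [Set.image_compl_eq π.bijective, Set.image_singleton]
    exact ordConnected_compl_singleton hπ⟩
  rcases isSimple_iff_isBlock.mp h _ hblock with hs | hu
  · have : ({i}ᶜ : Finset (Fin n)).card ≤ 1 := by
      rw [Finset.card_le_one_iff_subsingleton]
      simpa using hs
    rw [Finset.card_compl, Fintype.card_fin, Finset.card_singleton] at this
    omega
  · exact hu.ge (Set.mem_univ i) rfl

end Block

section Monotone

variable {α β : Type*} [LinearOrder α] [LinearOrder β] {f : α → β} {K : Set α}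

lemma ordConnected_image_of_monotone_of_surjective (hf : Monotone f) (hsurj : f.Surjective)
    (hK : K.OrdConnected) : (f '' K).OrdConnected := by
  rw [Set.ordConnected_def]
  rintro _ ⟨x, hx, rfl⟩ _ ⟨z, hz, rfl⟩ i ⟨hxi, hiz⟩
  obtain ⟨y, rfl⟩ := hsurj i
  rcases hxi.eq_or_lt with hxi | hxi
  · exact ⟨x, hx, hxi⟩
  rcases hiz.eq_or_lt with hiz | hiz
  · exact ⟨z, hz, hiz.symm⟩
  exact ⟨y, hK.out hx hz ⟨(hf.reflect_lt hxi).le, (hf.reflect_lt hiz).le⟩, rfl⟩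

lemma isBot_or_isTop_of_notMem_ordConnected (hf : Monotone f) (hK : K.OrdConnected)
    (himage : f '' K = Set.univ) {x : α} (hx : x ∉ K) : IsBot (f x) ∨ IsTop (f x) := by
  by_contra! h
  simp only [IsBot, IsTop, not_forall, not_le] at h
  obtain ⟨⟨i, hi⟩, j, hj⟩ := h
  obtain ⟨y, hy, rfl⟩ := himage.ge (Set.mem_univ i)
  obtain ⟨z, hz, rfl⟩ := himage.ge (Set.mem_univ j)
  exact hx (hK.out hy hz ⟨(hf.reflect_lt hi).le, (hf.reflect_lt hj).le⟩)

end Monotone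

namespace IsQuotient

variable {N m m' : ℕ} {π : Perm N} {σ : Perm m} {q : Fin N → Fin m} {σ' : Perm m'}
  {q' : Fin N → Fin m'} {K : Set (Fin N)}

lemma isBlock_fibre (h : IsQuotient π σ q) (j : Fin m) : IsBlock π (q ⁻¹' {j}) := by
  refine ⟨Set.ordConnected_singleton.preimage_mono h.monotone, ?_⟩
  have : π '' (q ⁻¹' {j}) = (σ ∘ q ∘ ⇑π⁻¹) ⁻¹' {σ j} := by
    ext x
    simp [Equiv.image_eq_preimage_symm, Equiv.Perm.inv_def]
  rw [this]
  exact Set.ordConnected_singleton.preimage_mono h.inv.monotone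

lemma image_inv (σ : Perm m) (q : Fin N → Fin m) (K : Set (Fin N)) :
    (σ ∘ q ∘ ⇑π⁻¹) '' (π '' K) = σ '' (q '' K) := by
  simp [Set.image_image]

lemma isBlock_image (h : IsQuotient π σ q) (hK : IsBlock π K) : IsBlock σ (q '' K) :=
  ⟨ordConnected_image_of_monotone_of_surjective h.monotone h.surjective hK.1,
    image_inv σ q K ▸
      ordConnected_image_of_monotone_of_surjective h.inv.monotone h.inv.surjective hK.2⟩

lemma subsingleton_image (h : IsQuotient π σ q) (hσ : IsSimple σ) (hm : 3 ≤ m)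
    (hK : IsBlock π K) (hne : K ≠ Set.univ) : (q '' K).Subsingleton := by
  refine (isSimple_iff_isBlock.mp hσ _ (h.isBlock_image hK)).resolve_right fun huniv => ?_
  obtain ⟨x, hx⟩ := (Set.ne_univ_iff_exists_notMem K).mp hne
  have himage : (σ ∘ q ∘ ⇑π⁻¹) '' (π '' K) = Set.univ := by
    rw [image_inv, huniv, Set.image_univ_of_surjective σ.surjective]
  refine hσ.not_extreme hm (isBot_or_isTop_of_notMem_ordConnected h.monotone hK.1 huniv hx) ?_
  simpa using isBot_or_isTop_of_notMem_ordConnected h.inv.monotone hK.2 himage (x := π x)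
    (by simpa using hx)

lemma eq_of_eq_of_isSimple (h : IsQuotient π σ q) (hσ : IsSimple σ) (hm : 3 ≤ m)
    (h' : IsQuotient π σ' q') (hm' : 2 ≤ m') {x y : Fin N} (hxy : q' x = q' y) : q x = q y := by
  refine h.subsingleton_image hσ hm (h'.isBlock_fibre (q' x)) (fun huniv => ?_) ⟨x, rfl, rfl⟩
    ⟨y, hxy.symm, rfl⟩
  have : Nontrivial (Fin m') := Fin.nontrivial_iff_two_le.mpr hm'
  obtain ⟨j, hj⟩ := exists_ne (q' x)
  obtain ⟨z, rfl⟩ := h'.surjective j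
  exact hj (huniv.ge (Set.mem_univ z))

theorem unique_of_isSimple (h : IsQuotient π σ q) (hσ : IsSimple σ) (hm : 3 ≤ m)
    (h' : IsQuotient π σ' q') (hσ' : IsSimple σ') (hm' : 2 ≤ m') :
    (⟨m, σ, q⟩ : Σ n, Perm n × (Fin N → Fin n)) = ⟨m', σ', q'⟩ := by
  have hker {x y} : q' x = q' y → q x = q y := h.eq_of_eq_of_isSimple hσ hm h' hm'
  have hle : m ≤ m' := by
    have hsurj : (q ∘ Function.surjInv h'.surjective).Surjective := fun i =>
      (h.surjective i).imp' q' fun x hx => (hker (Function.surjInv_eq _ _)).trans hx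
    simpa using Fintype.card_le_of_surjective _ hsurj
  exact h.eq_of_ker_eq h' fun x y =>
    ⟨h'.eq_of_eq_of_isSimple hσ' (hm.trans hle) h (by omega), hker⟩

end IsQuotient

section InflationOf

variable {m m' N : ℕ} {σ : Perm m} {σ' : Perm m'} {π : Perm N} {q : Fin N → Fin m}
  {q' : Fin N → Fin m'} {p : AnyPerm} {α : Fin m → AnyPerm} {τ τ' : Perm 2}

/-- `p` is an inflation of `σ` by nonempty permutations. -/
def IsInflationOf (σ : Perm m) (p : AnyPerm) : Prop := ∃ q, IsQuotient p.2 σ q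

lemma IsQuotient.length_pattern_fibre_pos (h : IsQuotient π σ q) (i : Fin m) :
    0 < (pattern π (q ⁻¹' {i})).1 :=
  length_pattern_pos (h.surjective i)

lemma isInflationOf_iff :
    IsInflationOf σ p ↔ ∃ α : Fin m → AnyPerm, (∀ i, 0 < (α i).1) ∧ p = inflate σ α := by
  constructor
  · rintro ⟨q, hq⟩
    exact ⟨_, hq.length_pattern_fibre_pos, hq.eq_inflate⟩
  · rintro ⟨α, hα, hp⟩
    obtain ⟨q, hq, -⟩ := exists_isQuotient_of_eq_inflate hp hα
    exact ⟨q, hq⟩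

lemma isInflationOf_inv_iff : IsInflationOf σ⁻¹ p⁻¹ ↔ IsInflationOf σ p := by
  refine ⟨fun ⟨_, hq⟩ => ?_, fun ⟨_, hq⟩ => ⟨_, hq.inv⟩⟩
  simpa [IsInflationOf] using ⟨_, hq.inv⟩

lemma IsQuotient.val_lt_iff (h : IsQuotient π σ q) {x y : Fin N} (hne : q x ≠ q y) :
    π x < π y ↔ σ (q x) < σ (q y) := by
  refine ⟨fun hxy => ?_, h.val_lt_of_lt⟩
  by_contra hlt
  exact hxy.asymm (h.val_lt_of_lt ((not_lt.mp hlt).lt_of_ne (σ.injective.ne hne.symm)))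

lemma IsQuotient.eq_of_length_two {r r' : Fin N → Fin 2} (h : IsQuotient π τ r)
    (h' : IsQuotient π τ' r') : τ = τ' := by
  obtain ⟨x, hx⟩ := h.surjective 0
  obtain ⟨x', hx'⟩ := h'.surjective 0
  obtain ⟨y, hy⟩ := h.surjective 1
  obtain ⟨y', hy'⟩ := h'.surjective 1
  have hx₀ : r (min x x') = 0 := by simp [h.monotone.map_min, hx]
  have hx₀' : r' (min x x') = 0 := by simp [h'.monotone.map_min, hx']
  have hy₁ : r (max y y') = 1 := by rw [h.monotone.map_max, hy]; exact max_eq_left (Fin.le_last _)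
  have hy₁' : r' (max y y') = 1 := by
    rw [h'.monotone.map_max, hy']
    exact max_eq_right (Fin.le_last _)
  have hτ := h.val_lt_iff (x := min x x') (y := max y y') (by simp [hx₀, hy₁])
  have hτ' := h'.val_lt_iff (x := min x x') (y := max y y') (by simp [hx₀', hy₁'])
  rw [hx₀, hy₁] at hτ
  rw [hτ, hx₀', hy₁'] at hτ'
  clear * - hτ'
  revert τ τ'
  decide

lemma IsQuotient.sigma_eq_of_isSimple (h : IsQuotient π σ q) (hσ : IsSimple σ) (hm : 2 ≤ m)
    (h' : IsQuotient π σ' q') (hσ' : IsSimple σ') (hm' : 2 ≤ m') :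
    (⟨m, σ⟩ : AnyPerm) = ⟨m', σ'⟩ := by
  rcases hm.eq_or_lt with rfl | hm₃
  · rcases hm'.eq_or_lt with rfl | hm₃'
    · rw [h.eq_of_length_two h']
    · cases h'.unique_of_isSimple hσ' hm₃' h hσ hm
      rfl
  · cases h.unique_of_isSimple hσ hm₃ h' hσ' hm'
    rfl

lemma isInflationOf_inflate_iff (hσ : IsSimple σ) (hm : 2 ≤ m) (hα : ∀ i, 0 < (α i).1)
    (hσ' : IsSimple σ') (hm' : 2 ≤ m') :
    IsInflationOf σ' (inflate σ α) ↔ (⟨m, σ⟩ : AnyPerm) = ⟨m', σ'⟩ := by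
  obtain ⟨q, hq, -⟩ := exists_isQuotient_of_eq_inflate (p := inflate σ α) rfl hα
  constructor
  · rintro ⟨q', hq'⟩
    exact hq.sigma_eq_of_isSimple hσ hm hq' hσ' hm'
  · rintro ⟨⟩
    exact ⟨q, hq⟩

end InflationOf

section LengthTwo

variable {N : ℕ} {π : Perm N} {τ : Perm 2} {S T U S' T' : Set (Fin N)} {p a b c d : AnyPerm}

/-- Every point of `π` with position in `S` is to the left of every point with position in `T`, and
below or above it according to `τ`. -/
def Precedes (π : Perm N) (τ : Perm 2) (S T : Set (Fin N)) : Prop :=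
  ∀ x ∈ S, ∀ y ∈ T, x < y ∧ (π x < π y ↔ τ 0 < τ 1)

namespace Precedes

lemma mono (h : Precedes π τ S T) (hS : S' ⊆ S) (hT : T' ⊆ T) : Precedes π τ S' T' :=
  fun x hx y hy => h x (hS hx) y (hT hy)

lemma union_left (h : Precedes π τ S U) (h' : Precedes π τ T U) : Precedes π τ (S ∪ T) U :=
  fun x hx y hy => hx.elim (fun hx => h x hx y hy) fun hx => h' x hx y hy

lemma union_right (h : Precedes π τ S T) (h' : Precedes π τ S U) : Precedes π τ S (T ∪ U) :=
  fun x hx y hy => hy.elim (fun hy => h x hx y hy) fun hy => h' x hx y hy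

lemma disjoint (h : Precedes π τ S T) : Disjoint S T :=
  Set.disjoint_left.mpr fun x hS hT => (h x hS x hT).1.false

lemma pattern_union (h : Precedes π τ S T) :
    pattern π (S ∪ T) = inflate τ ![pattern π S, pattern π T] := by
  classical
  have hdisj := Set.disjoint_left.mp h.disjoint
  let q : Fin N → Fin 2 := fun x => if x ∈ S then 0 else 1
  have hS {x} (hx : x ∈ S) : q x = 0 := if_pos hx
  have hT {x} (hx : x ∈ T) : q x = 1 := if_neg fun hxS => hdisj hxS hx
  rw [pattern_eq_inflate (q := q) (σ := τ)]
  · congr 1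
    ext1 i
    fin_cases i <;> exact congrArg (pattern π) (Set.ext fun x => by simp [q]; tauto)
  · rintro x (hx | hx) y (hy | hy) hxy <;> simp only [hS, hT, hx, hy] at hxy <;> try omega
    exact (h x hx y hy).1
  · rintro x (hx | hx) y (hy | hy) hxy <;> simp only [hS, hT, hx, hy] at hxy <;> try omega
    · exact (h x hx y hy).2.mpr hxy
    · exact (π.injective.ne (h y hy x hx).1.ne').lt_of_le
        (not_lt.mp fun hlt => hxy.asymm ((h y hy x hx).2.mp hlt))

lemma subset_of_mem (h : Precedes π τ S T) (h' : Precedes π τ S' T') (hcover : S' ∪ T' = Set.univ)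
    {z : Fin N} (hz : z ∈ T) (hz' : z ∈ S') : S ⊆ S' := fun x hx =>
  (hcover.ge (Set.mem_univ x)).resolve_right fun hx' =>
    (h x hx z hz).1.asymm (h' z hz' x hx').1

lemma exists_pattern_eq_inflate (h : Precedes π τ S T) (h' : Precedes π τ S' T')
    (hcover : S ∪ T = Set.univ) (hcover' : S' ∪ T' = Set.univ) (hne : (T ∩ S').Nonempty) :
    ∃ γ, 0 < γ.1 ∧ pattern π S' = inflate τ ![pattern π S, γ] ∧
      pattern π T = inflate τ ![γ, pattern π T'] := by
  obtain ⟨z, hz, hz'⟩ := hne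
  have hS : S ⊆ S' := h.subset_of_mem h' hcover' hz hz'
  have hT : T' ⊆ T := fun y hy => (hcover.ge (Set.mem_univ y)).resolve_left fun hyS =>
    (h y hyS z hz).1.asymm (h' z hz' y hy).1
  refine ⟨pattern π (T ∩ S'), length_pattern_pos ⟨z, hz, hz'⟩, ?_, ?_⟩
  · rw [← (h.mono subset_rfl Set.inter_subset_left).pattern_union, Set.union_inter_distrib_left,
      hcover, Set.univ_inter, Set.union_eq_self_of_subset_left hS]
  · rw [← (h'.mono Set.inter_subset_right subset_rfl).pattern_union, Set.inter_union_distrib_right,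
      hcover', Set.inter_univ, Set.union_eq_self_of_subset_right hT]

end Precedes

lemma IsQuotient.precedes {m : ℕ} {σ : Perm m} {q : Fin N → Fin m} (h : IsQuotient π σ q)
    {i j : Fin m} (hij : i < j) (hσ : σ i < σ j ↔ τ 0 < τ 1) :
    Precedes π τ (q ⁻¹' {i}) (q ⁻¹' {j}) := by
  rintro x rfl y rfl
  exact ⟨h.lt_of_lt hij, (h.val_lt_iff hij.ne).trans hσ⟩

lemma exists_precedes_of_eq_inflate (hp : p = inflate τ ![a, b]) (ha : 0 < a.1) (hb : 0 < b.1) :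
    ∃ S T, Precedes p.2 τ S T ∧ S ∪ T = Set.univ ∧ pattern p.2 S = a ∧ pattern p.2 T = b := by
  obtain ⟨q, hq, hα⟩ := exists_isQuotient_of_eq_inflate hp (Fin.forall_fin_two.mpr ⟨ha, hb⟩)
  refine ⟨q ⁻¹' {0}, q ⁻¹' {1}, hq.precedes (by decide) Iff.rfl, ?_, hα 0, hα 1⟩
  ext x
  simp only [Set.mem_union, Set.mem_preimage, Set.mem_singleton_iff, Set.mem_univ, iff_true]
  omega

theorem inflate_two_eq_inflate_two (ha : 0 < a.1) (hb : 0 < b.1) (hc : 0 < c.1) (hd : 0 < d.1)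
    (h : inflate τ ![a, b] = inflate τ ![c, d]) :
    (a = c ∧ b = d) ∨ (∃ γ, 0 < γ.1 ∧ c = inflate τ ![a, γ] ∧ b = inflate τ ![γ, d]) ∨
      ∃ γ, 0 < γ.1 ∧ a = inflate τ ![c, γ] ∧ d = inflate τ ![γ, b] := by
  obtain ⟨p, hp⟩ : ∃ p, p = inflate τ ![a, b] := ⟨_, rfl⟩
  obtain ⟨S', T', hST', hcover', rfl, rfl⟩ := exists_precedes_of_eq_inflate (hp.trans h) hc hd
  obtain ⟨S, T, hST, hcover, hSa, hTb⟩ := exists_precedes_of_eq_inflate hp ha hb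
  clear hp h
  subst hSa hTb
  rcases Set.disjoint_or_nonempty_inter T S' with hTS' | hTS'
  · rcases Set.disjoint_or_nonempty_inter T' S with hT'S | hT'S
    · have hS : S = S' := Set.Subset.antisymm
        (hT'S.symm.subset_left_of_subset_union (hcover' ▸ Set.subset_univ S))
        (hTS'.symm.subset_left_of_subset_union (hcover ▸ Set.subset_univ S'))
      have hT : T = T' := Set.Subset.antisymm
        (hTS'.subset_right_of_subset_union (hcover' ▸ Set.subset_univ T))
        (hT'S.subset_right_of_subset_union (hcover ▸ Set.subset_univ T'))
      exact Or.inl ⟨hS ▸ rfl, hT ▸ rfl⟩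
    · exact Or.inr (Or.inr (hST'.exists_pattern_eq_inflate hST hcover' hcover hT'S))
  · exact Or.inr (Or.inl (hST.exists_pattern_eq_inflate hST' hcover hcover' hTS'))

lemma length_inflate_two (τ : Perm 2) (a b : AnyPerm) : (inflate τ ![a, b]).1 = a.1 + b.1 := by
  rw [length_inflate]
  simp

lemma inflate_two_right_cancel (ha : 0 < a.1) (hb : 0 < b.1) (hc : 0 < c.1)
    (h : inflate τ ![a, c] = inflate τ ![b, c]) : a = b := by
  have hlen := congrArg Sigma.fst h
  rcases inflate_two_eq_inflate_two ha hc hb hc h with ⟨rfl, -⟩ | ⟨γ, hγ, rfl, -⟩ | ⟨γ, hγ, rfl, -⟩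
  · rfl
  all_goals
    simp only [length_inflate_two] at hlen
    omega

lemma inflate_two_assoc (τ : Perm 2) (ha : 0 < a.1) (hb : 0 < b.1) (hc : 0 < c.1) :
    inflate τ ![inflate τ ![a, b], c] = inflate τ ![a, inflate τ ![b, c]] := by
  obtain ⟨θ, hθ⟩ : ∃ θ : Perm 3, ∀ i j, i < j → (θ i < θ j ↔ τ 0 < τ 1) := by
    revert τ
    decide
  obtain ⟨p, hp⟩ : ∃ p, p = inflate θ ![a, b, c] := ⟨_, rfl⟩
  obtain ⟨q, hq, hα⟩ := exists_isQuotient_of_eq_inflate hp (by simp [Fin.forall_fin_succ, *])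
  clear hp
  have hprec {i j : Fin 3} (hij : i < j) := hq.precedes (τ := τ) hij (hθ i j hij)
  have h₀₁ := hprec (i := 0) (j := 1) (by decide)
  have h₀₂ := hprec (i := 0) (j := 2) (by decide)
  have h₁₂ := hprec (i := 1) (j := 2) (by decide)
  obtain rfl := hα 0
  obtain rfl := hα 1
  obtain rfl := hα 2
  rw [← h₀₁.pattern_union, ← (h₀₂.union_left h₁₂).pattern_union, ← h₁₂.pattern_union,
    ← (h₀₁.union_right h₀₂).pattern_union, Set.union_assoc]

end LengthTwo

section Reduced

/-- `inflate σ α` is the substitution decomposition: `σ` is simple of length at least two, the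
blocks are nonempty, and if `σ` has length two then the first block is not itself an inflation of
`σ`. -/
structure IsReducedInflation {m : ℕ} (σ : Perm m) (α : Fin m → AnyPerm) : Prop where
  isSimple : IsSimple σ
  two_le : 2 ≤ m
  pos : ∀ i, 0 < (α i).1
  not_isInflationOf : m = 2 → ∀ i : Fin m, (i : ℕ) = 0 → ¬ IsInflationOf σ (α i)

variable {m m' n : ℕ} {σ : Perm m} {σ' : Perm m'} {α : Fin m → AnyPerm} {α' : Fin m' → AnyPerm}
  {π : Perm n} {K : Set (Fin n)} {τ : Perm 2} {p a b : AnyPerm}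

lemma isInflationOf_two_iff :
    IsInflationOf τ p ↔ ∃ a b : AnyPerm, 0 < a.1 ∧ 0 < b.1 ∧ p = inflate τ ![a, b] := by
  simp only [isInflationOf_iff, ← FinVec.exists_iff, FinVec.Exists, Fin.forall_fin_two,
    Matrix.cons_val_zero, Matrix.cons_val_one, and_assoc]

lemma isReducedInflation_two_iff :
    IsReducedInflation τ ![a, b] ↔ 0 < a.1 ∧ 0 < b.1 ∧ ¬ IsInflationOf τ a := by
  refine ⟨fun h => ⟨h.pos 0, h.pos 1, h.not_isInflationOf rfl 0 rfl⟩, ?_⟩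
  rintro ⟨ha, hb, hn⟩
  refine ⟨isSimple_two τ, le_rfl, Fin.forall_fin_two.mpr ⟨ha, hb⟩, fun _ i hi => ?_⟩
  obtain rfl : i = 0 := Fin.ext hi
  exact hn

lemma eq_one_of_sigma_ne_swap (hm : m = 2) (hσ : (⟨m, σ⟩ : AnyPerm) ≠ ⟨2, Equiv.swap 0 1⟩) :
    σ = 1 := by
  subst hm
  have key : ∀ σ : Perm 2, σ = 1 ∨ σ = Equiv.swap 0 1 := by decide
  exact (key σ).resolve_right (by rintro rfl; exact hσ rfl)

namespace IsReducedInflation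

theorem unique (h : IsReducedInflation σ α) (h' : IsReducedInflation σ' α')
    (heq : inflate σ α = inflate σ' α') :
    (⟨m, σ, α⟩ : Σ m, Perm m × (Fin m → AnyPerm)) = ⟨m', σ', α'⟩ := by
  obtain ⟨p, hp⟩ : ∃ p, p = inflate σ α := ⟨_, rfl⟩
  obtain ⟨q, hq, hα⟩ := exists_isQuotient_of_eq_inflate hp h.pos
  obtain ⟨q', hq', hα'⟩ := exists_isQuotient_of_eq_inflate (hp.trans heq) h'.pos
  cases hq.sigma_eq_of_isSimple h.isSimple h.two_le hq' h'.isSimple h'.two_le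
  rcases h.two_le.eq_or_lt with rfl | hm
  · rw [← FinVec.etaExpand_eq α] at h heq
    rw [← FinVec.etaExpand_eq α'] at h' heq
    obtain ⟨ha, hb, hn⟩ := isReducedInflation_two_iff.mp h
    obtain ⟨ha', hb', hn'⟩ := isReducedInflation_two_iff.mp h'
    rcases inflate_two_eq_inflate_two ha hb ha' hb' heq
      with ⟨h₀, h₁⟩ | ⟨γ, hγ, h₀, -⟩ | ⟨γ, hγ, h₀, -⟩
    · obtain rfl : α = α' := funext (Fin.forall_fin_two.mpr ⟨h₀, h₁⟩)
      rfl
    · exact absurd (isInflationOf_two_iff.mpr ⟨_, _, ha, hγ, h₀⟩) hn'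
    · exact absurd (isInflationOf_two_iff.mpr ⟨_, _, ha', hγ, h₀⟩) hn
  · cases hq.unique_of_isSimple h.isSimple hm hq' h'.isSimple h'.two_le
    obtain rfl : α = α' := funext fun i => (hα i).symm.trans (hα' i)
    rfl

lemma inv (h : IsReducedInflation σ α) (hσ : (⟨m, σ⟩ : AnyPerm) ≠ ⟨2, Equiv.swap 0 1⟩) :
    IsReducedInflation σ⁻¹ fun i => (α (σ⁻¹ i))⁻¹ := by
  refine ⟨h.isSimple.inv, h.two_le, fun i => h.pos _, ?_⟩
  rintro rfl i hi
  obtain rfl := eq_one_of_sigma_ne_swap rfl hσ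
  rw [isInflationOf_inv_iff]
  exact h.not_isInflationOf rfl i hi

lemma inv_inflate_eq_iff (h : IsReducedInflation σ α)
    (hσ : (⟨m, σ⟩ : AnyPerm) ≠ ⟨2, Equiv.swap 0 1⟩) :
    (inflate σ α)⁻¹ = inflate σ α ↔ σ⁻¹ = σ ∧ ∀ i, α (σ i) = (α i)⁻¹ := by
  rw [inv_inflate]
  constructor
  · intro heq
    have := (h.inv hσ).unique h heq
    simp only [Sigma.mk.injEq, heq_eq_eq, Prod.mk.injEq, true_and] at this
    exact ⟨this.1, fun i => by simpa using (congrFun this.2 (σ i)).symm⟩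
  · rintro ⟨hinv, hα⟩
    rw [hinv]
    congr 1
    funext i
    rw [hα, inv_inv]

lemma two_le_length_inflate (h : IsReducedInflation σ α) : 2 ≤ (inflate σ α).1 :=
  calc
    2 ≤ ∑ _i : Fin m, 1 := by simpa using h.two_le
    _ ≤ ∑ i, (α i).1 := Finset.sum_le_sum fun i _ => h.pos i
    _ = (inflate σ α).1 := (length_inflate σ α).symm

end IsReducedInflation

lemma exists_isQuotient_pattern_range {c : Fin n → Fin n} (hlt : ∀ x y, c x < c y → x < y)
    (hval : ∀ x y, π (c x) < π (c y) → π x < π y) :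
    ∃ q, IsQuotient π (pattern π (Set.range c)).2 q := by
  obtain ⟨e, heu, hev⟩ := isStandardization_pattern π (Set.range c)
  refine ⟨fun x => e.symm ⟨c x, x, rfl⟩, fun y => ?_, fun {x y} hxy => hlt x y ?_,
    fun {x y} hxy => hval x y ?_⟩
  · obtain ⟨x, hx⟩ := (e y).2
    exact ⟨x, by simp [hx]⟩
  · simpa using (heu _ _).mpr hxy
  · simpa using (hev _ _).mpr hxy

lemma lt_of_ite_lt_ite {X L : Type*} [LinearOrder L] {u : X → L} (hu : u.Injective) {K : Set X}
    [DecidablePred (· ∈ K)] (hK : (u '' K).OrdConnected) {i x y : X} (hi : i ∈ K)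
    (h : u (if x ∈ K then i else x) < u (if y ∈ K then i else y)) : u x < u y := by
  have hmem {z} : u z ∈ u '' K ↔ z ∈ K := hu.mem_set_image
  split_ifs at h with hx hy hy
  · exact absurd h (lt_irrefl _)
  · exact lt_of_not_ge fun hyx => hy (hmem.mp (hK.out (hmem.mpr hi) (hmem.mpr hx) ⟨h.le, hyx⟩))
  · exact lt_of_not_ge fun hyx => hx (hmem.mp (hK.out (hmem.mpr hy) (hmem.mpr hi) ⟨hyx, h.le⟩))
  · exact h

lemma IsBlock.exists_isQuotient (hK : IsBlock π K) (hnt : K.Nontrivial) (hne : K ≠ Set.univ) :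
    ∃ p : AnyPerm, 2 ≤ p.1 ∧ p.1 < n ∧ ∃ q, IsQuotient π p.2 q := by
  classical
  obtain ⟨i, hi, j, hj, hij⟩ := hnt
  obtain ⟨k, hk⟩ := (Set.ne_univ_iff_exists_notMem K).mp hne
  let c : Fin n → Fin n := fun x => if x ∈ K then i else x
  refine ⟨pattern π (Set.range c), ?_, ?_, exists_isQuotient_pattern_range
    (fun x y => lt_of_ite_lt_ite Function.injective_id (by simpa using hK.1) hi)
    fun x y => lt_of_ite_lt_ite π.injective hK.2 hi⟩
  · have hnt : (Set.range c).Nontrivial :=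
      ⟨i, ⟨i, if_pos hi⟩, k, ⟨k, if_neg hk⟩, fun h => hk (h ▸ hi)⟩
    rw [length_pattern]
    exact (Set.one_lt_ncard_iff_nontrivial).mpr hnt
  · have hj' : j ∉ Set.range c := by
      rintro ⟨x, hx⟩
      by_cases hxK : x ∈ K
      · exact hij ((if_pos hxK).symm.trans hx)
      · exact hxK (((if_neg hxK).symm.trans hx) ▸ hj)
    rw [length_pattern]
    calc
      (Set.range c).ncard < (Set.univ : Set (Fin n)).ncard := Set.ncard_lt_ncard
        (Set.ssubset_univ_iff.mpr ((Set.ne_univ_iff_exists_notMem _).mpr ⟨j, hj'⟩))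
      _ = n := by simp

lemma exists_isSimple_isQuotient (π : Perm n) (hn : 2 ≤ n) :
    ∃ p : AnyPerm, 2 ≤ p.1 ∧ IsSimple p.2 ∧ ∃ q, IsQuotient π p.2 q := by
  classical
  have hex : ∃ m, 2 ≤ m ∧ ∃ σ : Perm m, ∃ q, IsQuotient π σ q := ⟨n, hn, π, id, .refl π⟩
  obtain ⟨hm, σ, q, hq⟩ := Nat.find_spec hex
  refine ⟨⟨_, σ⟩, hm, isSimple_iff_isBlock.mpr fun K hK => ?_, q, hq⟩
  by_contra! ⟨hnt, hne⟩
  obtain ⟨p, hp, hlt, r, hr⟩ := hK.exists_isQuotient hnt hne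
  exact Nat.find_min hex hlt ⟨hp, p.2, _, hq.trans hr⟩

lemma exists_isReducedInflation_two (τ : Perm 2) (ha : 0 < a.1) (hb : 0 < b.1) :
    ∃ c d, IsReducedInflation τ ![c, d] ∧ inflate τ ![a, b] = inflate τ ![c, d] := by
  induction hn : a.1 using Nat.strong_induction_on generalizing a b with
  | _ n ih =>
    by_cases h : IsInflationOf τ a
    · obtain ⟨c, d, hc, hd, rfl⟩ := isInflationOf_two_iff.mp h
      rw [length_inflate_two] at hn
      rw [inflate_two_assoc τ hc hd hb]
      refine ih c.1 (by omega) hc ?_ rfl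
      rw [length_inflate_two]
      omega
    · exact ⟨a, b, isReducedInflation_two_iff.mpr ⟨ha, hb, h⟩, rfl⟩

theorem exists_isReducedInflation (hp : 2 ≤ p.1) :
    ∃ (m : ℕ) (σ : Perm m) (α : Fin m → AnyPerm), IsReducedInflation σ α ∧ p = inflate σ α := by
  obtain ⟨⟨m, σ⟩, hm, hσ, q, hq⟩ := exists_isSimple_isQuotient p.2 hp
  by_cases h : m = 2
  · subst h
    obtain ⟨a, b, ha, hb, hab⟩ := isInflationOf_two_iff.mp ⟨q, hq⟩
    obtain ⟨c, d, hcd, heq⟩ := exists_isReducedInflation_two σ ha hb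
    exact ⟨2, σ, ![c, d], hcd, hab.trans heq⟩
  · exact ⟨m, σ, _, ⟨hσ, hm, hq.length_pattern_fibre_pos, fun h' => absurd h' h⟩, hq.eq_inflate⟩

end Reduced

section SkewSum

/-- The skew sum `a ⊖ b`, that is, the inflation `21[a, b]`. -/
noncomputable def skewSum (a b : AnyPerm) : AnyPerm :=
  inflate (Equiv.swap 0 1) ![a, b]

/-- The permutations of positive length that are not skew sums. -/
def skewIndecomposables : Set AnyPerm :=
  {a | 0 < a.1 ∧ ¬ IsInflationOf (Equiv.swap 0 1 : Perm 2) a}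

variable {a b c d p : AnyPerm}

lemma length_skewSum (a b : AnyPerm) : (skewSum a b).1 = a.1 + b.1 :=
  length_inflate_two _ a b

lemma length_skewSum_pos (ha : 0 < a.1) : 0 < (skewSum a b).1 := by
  rw [length_skewSum]
  exact Nat.add_pos_left ha _

lemma inv_skewSum (a b : AnyPerm) : (skewSum a b)⁻¹ = skewSum b⁻¹ a⁻¹ := by
  rw [skewSum, inv_inflate, Equiv.swap_inv, skewSum]
  congr 1
  exact funext (Fin.forall_fin_two.mpr ⟨by simp, by simp⟩)

lemma skewSum_assoc (ha : 0 < a.1) (hb : 0 < b.1) (hc : 0 < c.1) :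
    skewSum (skewSum a b) c = skewSum a (skewSum b c) :=
  inflate_two_assoc _ ha hb hc

lemma skewSum_right_cancel (ha : 0 < a.1) (hb : 0 < b.1) (hc : 0 < c.1)
    (h : skewSum a c = skewSum b c) : a = b :=
  inflate_two_right_cancel ha hb hc h

lemma eq_and_eq_of_skewSum_eq_skewSum (ha : a ∈ skewIndecomposables) (hb : 0 < b.1)
    (hc : c ∈ skewIndecomposables) (hd : 0 < d.1) (h : skewSum a b = skewSum c d) :
    a = c ∧ b = d := by
  rcases inflate_two_eq_inflate_two ha.1 hb hc.1 hd h with h | ⟨γ, hγ, heq, -⟩ | ⟨γ, hγ, heq, -⟩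
  · exact h
  · exact absurd (isInflationOf_two_iff.mpr ⟨_, _, ha.1, hγ, heq⟩) hc.2
  · exact absurd (isInflationOf_two_iff.mpr ⟨_, _, hc.1, hγ, heq⟩) ha.2

/-- The involution `a ⊖ a⁻¹`. -/
noncomputable def skewPair (a : AnyPerm) : AnyPerm :=
  skewSum a a⁻¹

/-- The skew sum `a ⊖ γ ⊖ a⁻¹`, which is an involution when `γ` is. -/
noncomputable def skewTriple (x : AnyPerm × AnyPerm) : AnyPerm :=
  skewSum x.1 (skewSum x.2 x.1⁻¹)

lemma length_skewPair (a : AnyPerm) : (skewPair a).1 = 2 * a.1 := by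
  rw [skewPair, length_skewSum, two_mul]
  rfl

lemma length_skewTriple (x : AnyPerm × AnyPerm) : (skewTriple x).1 = 2 * x.1.1 + x.2.1 := by
  rw [skewTriple, length_skewSum, length_skewSum, two_mul, add_assoc, add_comm x.2.1]
  rfl

lemma inv_skewPair (a : AnyPerm) : (skewPair a)⁻¹ = skewPair a := by
  rw [skewPair, inv_skewSum, inv_inv]

lemma inv_skewTriple (ha : 0 < a.1) (hγ : 0 < γ.1) (h : γ⁻¹ = γ) :
    (skewTriple (a, γ))⁻¹ = skewTriple (a, γ) := by
  simp only [skewTriple]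
  rw [inv_skewSum, inv_skewSum, inv_inv, h]
  exact skewSum_assoc ha hγ ha

lemma injOn_skewPair : skewIndecomposables.InjOn skewPair := fun _ ha _ hb h =>
  (eq_and_eq_of_skewSum_eq_skewSum (b := _⁻¹) (d := _⁻¹) ha ha.1 hb hb.1 h).1

lemma injOn_skewTriple : (skewIndecomposables ×ˢ {γ | 0 < γ.1}).InjOn skewTriple := by
  rintro ⟨a, γ⟩ ⟨ha, hγ⟩ ⟨b, δ⟩ ⟨hb, hδ⟩ h
  obtain ⟨rfl, h'⟩ := eq_and_eq_of_skewSum_eq_skewSum ha (length_skewSum_pos hγ) hb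
    (length_skewSum_pos hδ) h
  exact Prod.ext rfl (skewSum_right_cancel (c := a⁻¹) hγ hδ ha.1 h')

lemma skewPair_ne_skewTriple (ha : a ∈ skewIndecomposables) (hb : b ∈ skewIndecomposables)
    (hγ : 0 < γ.1) : skewPair a ≠ skewTriple (b, γ) := by
  intro h
  obtain ⟨rfl, -⟩ := eq_and_eq_of_skewSum_eq_skewSum (b := a⁻¹) ha ha.1 hb
    (length_skewSum_pos hγ) h
  have hlen := congrArg Sigma.fst h
  rw [length_skewPair, length_skewTriple] at hlen
  exact hγ.ne' (Nat.add_eq_left.mp hlen.symm)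

lemma exists_eq_skewSum (h : IsInflationOf (Equiv.swap 0 1 : Perm 2) p) :
    ∃ a ∈ skewIndecomposables, ∃ b : AnyPerm, 0 < b.1 ∧ p = skewSum a b := by
  obtain ⟨a, b, ha, hb, rfl⟩ := isInflationOf_two_iff.mp h
  obtain ⟨c, d, hcd, heq⟩ := exists_isReducedInflation_two (Equiv.swap 0 1) ha hb
  obtain ⟨hc, hd, hn⟩ := isReducedInflation_two_iff.mp hcd
  exact ⟨c, ⟨hc, hn⟩, d, hd, heq⟩

theorem eq_skewPair_or_eq_skewTriple (hp : p⁻¹ = p)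
    (h : IsInflationOf (Equiv.swap 0 1 : Perm 2) p) :
    ∃ a ∈ skewIndecomposables,
      p = skewPair a ∨ ∃ γ : AnyPerm, 0 < γ.1 ∧ γ⁻¹ = γ ∧ p = skewTriple (a, γ) := by
  obtain ⟨a, ha, b, hb, rfl⟩ := exists_eq_skewSum h
  refine ⟨a, ha, ?_⟩
  rw [inv_skewSum] at hp
  rcases inflate_two_eq_inflate_two (c := b⁻¹) (d := a⁻¹) ha.1 hb hb ha.1 hp.symm
    with ⟨-, rfl⟩ | ⟨γ, hγ, hb', rfl⟩ | ⟨γ, hγ, heq, -⟩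
  · exact Or.inl rfl
  · refine Or.inr ⟨γ, hγ, skewSum_right_cancel hγ hγ ha.1 (c := a⁻¹) ?_, rfl⟩
    calc
      skewSum γ⁻¹ a⁻¹ = (skewSum a γ)⁻¹ := (inv_skewSum a γ).symm
      _ = skewSum γ a⁻¹ := inv_eq_iff_eq_inv.mpr hb'.symm
  · exact absurd (isInflationOf_two_iff.mpr ⟨b⁻¹, γ, hb, hγ, heq⟩) ha.2

end SkewSum

section Orbits

variable {X G : Type*} [LinearOrder X] {σ : Equiv.Perm X}

/-- The size of the orbit of `i` under an involution `σ`. -/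
def orbitCard (σ : Equiv.Perm X) (i : X) : ℕ :=
  if σ i = i then 1 else 2

lemma sum_orbitCard_mul [Fintype X] (hσ : Function.Involutive σ) {l : X → ℕ}
    (hl : ∀ i, l (σ i) = l i) :
    ∑ i : {i // i ≤ σ i}, orbitCard σ i * l i = ∑ i, l i := by
  have hsymm : ∑ i, (if i < σ i then l i else 0) = ∑ i, if σ i < i then l i else 0 := by
    rw [← Equiv.sum_comp σ]
    exact Finset.sum_congr rfl fun i _ => by rw [hσ, hl]
  calc
    ∑ i : {i // i ≤ σ i}, orbitCard σ i * l i
        = ∑ i, if i ≤ σ i then orbitCard σ i * l i else 0 := by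
      rw [← Finset.sum_filter]
      exact (Finset.sum_subtype _ (by simp) fun i => orbitCard σ i * l i).symm
    _ = ∑ i, ((if i ≤ σ i then l i else 0) + if i < σ i then l i else 0) := by
      refine Finset.sum_congr rfl fun i _ => ?_
      rcases lt_trichotomy i (σ i) with h | h | h
      · simp [orbitCard, h, h.le, h.ne', two_mul]
      · simp [orbitCard, ← h]
      · simp [h.not_ge, h.not_gt]
    _ = ∑ i, ((if i ≤ σ i then l i else 0) + if σ i < i then l i else 0) := by
      rw [Finset.sum_add_distrib, hsymm, ← Finset.sum_add_distrib]
    _ = ∑ i, l i := by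
      refine Finset.sum_congr rfl fun i _ => ?_
      by_cases h : i ≤ σ i
      · simp [h]
      · simp [h, not_le.mp h]

lemma nontrivial_le_apply [Fintype X] (hσ : Function.Involutive σ) (hX : 2 ≤ Fintype.card X)
    (h : Fintype.card X = 2 → σ = 1) : Nontrivial {i // i ≤ σ i} := by
  rcases hX.eq_or_lt with h2 | h2
  · obtain rfl := h h2.symm
    obtain ⟨i, j, hij⟩ := Fintype.exists_pair_of_one_lt_card hX
    exact ⟨⟨i, le_rfl⟩, ⟨j, le_rfl⟩, fun h => hij (congrArg Subtype.val h)⟩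
  · rw [← Fintype.one_lt_card_iff_nontrivial]
    have hle := calc
      Fintype.card X = ∑ i : {i // i ≤ σ i}, orbitCard σ i := by
        simpa using (sum_orbitCard_mul hσ (l := fun _ => 1) fun _ => rfl).symm
      _ ≤ ∑ _i : {i // i ≤ σ i}, 2 := Finset.sum_le_sum fun i _ => by
        unfold orbitCard
        split_ifs <;> simp
      _ = 2 * Fintype.card {i // i ≤ σ i} := by simp [mul_comm]
    omega

lemma exists_extend_of_involutive [InvolutiveInv G] (hσ : Function.Involutive σ)
    (β : {i // i ≤ σ i} → G) (hβ : ∀ i : {i // i ≤ σ i}, σ i = i.1 → (β i)⁻¹ = β i) :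
    ∃ α : X → G, (∀ i, α (σ i) = (α i)⁻¹) ∧ ∀ i : {i // i ≤ σ i}, α i = β i := by
  have hle (i : X) (h : ¬ i ≤ σ i) : σ i ≤ σ (σ i) := (hσ i).symm ▸ (not_le.mp h).le
  refine ⟨fun i => if h : i ≤ σ i then β ⟨i, h⟩ else (β ⟨σ i, hle i h⟩)⁻¹, fun i => ?_,
    fun i => dif_pos i.2⟩
  beta_reduce
  rcases lt_trichotomy i (σ i) with h | h | h
  · rw [dif_pos h.le, dif_neg (by rw [hσ]; exact h.not_ge)]
    simp only [hσ i]
  · simp only [← h, le_refl, ↓reduceDIte]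
    exact (hβ ⟨i, h.le⟩ h.symm).symm
  · rw [dif_pos (by rw [hσ]; exact h.le), dif_neg h.not_ge, inv_inv]

lemma eq_of_forall_le_apply [Inv G] (hσ : Function.Involutive σ) {α α' : X → G}
    (hα : ∀ i, α (σ i) = (α i)⁻¹) (hα' : ∀ i, α' (σ i) = (α' i)⁻¹)
    (h : ∀ i, i ≤ σ i → α i = α' i) : α = α' := by
  funext i
  rcases le_total i (σ i) with hi | hi
  · exact h i hi
  · rw [← hσ i, hα, hα', h (σ i) ((hσ i).symm ▸ hi)]

theorem sizeGF_pi_of_involutive {R : Type*} [CommSemiring R] [Fintype X] [InvolutiveInv G]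
    (hσ : Function.Involutive σ) {l : G → ℕ} (hl : ∀ g, l g⁻¹ = l g)
    (hfin : ∀ k n, k ≠ 0 → ((fun g => k * l g) ⁻¹' {n}).Finite) {S : X → Set G}
    (hS : ∀ i, ∀ g ∈ S i, g⁻¹ ∈ S (σ i)) :
    sizeGF R (fun α : X → G => ∑ i, l (α i))
        {α | (∀ i, α (σ i) = (α i)⁻¹) ∧ ∀ i, α i ∈ S i} =
      ∏ i : {i // i ≤ σ i},
        sizeGF R (fun g => orbitCard σ i * l g) {g ∈ S i | σ i = i.1 → g⁻¹ = g} := by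
  have himage : (fun (α : X → G) (i : {i // i ≤ σ i}) => α i) ''
      {α | (∀ i, α (σ i) = (α i)⁻¹) ∧ ∀ i, α i ∈ S i} =
      Set.univ.pi fun i : {i // i ≤ σ i} => {g ∈ S i | σ i = i.1 → g⁻¹ = g} := by
    refine Set.Subset.antisymm ?_ fun β hβ => ?_
    · rintro _ ⟨α, ⟨hα, hαS⟩, rfl⟩ i -
      exact ⟨hαS i, fun hi => by rw [← hα, hi]⟩
    · obtain ⟨α, hα, hαβ⟩ := exists_extend_of_involutive hσ β fun i => (hβ i trivial).2
      have hmem (i : X) (hi : i ≤ σ i) : α i ∈ S i := by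
        rw [hαβ ⟨i, hi⟩]
        exact (hβ ⟨i, hi⟩ trivial).1
      refine ⟨α, ⟨hα, fun i => ?_⟩, funext hαβ⟩
      rcases le_total i (σ i) with hi | hi
      · exact hmem i hi
      · rw [← hσ i, hα]
        exact hS _ _ (hmem _ ((hσ i).symm ▸ hi))
  rw [← sizeGF_pi, ← himage, sizeGF_image]
  · exact fun α hα α' hα' h =>
      eq_of_forall_le_apply hσ hα.1 hα'.1 fun i hi => congrFun h ⟨i, hi⟩
  · exact fun α hα => sum_orbitCard_mul hσ (l := l ∘ α) fun i => by
      rw [Function.comp, hα.1, hl, Function.comp]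
  · refine fun i n => hfin _ n ?_
    unfold orbitCard
    split_ifs <;> simp

end Orbits

section ProfiledClass

open Polynomial PowerSeries

/-- The generating function of `S` in which a permutation of length `n` is counted by
`X ^ (k * n)`; the case `k = 2` is needed for pairs of mutually inverse blocks. -/
noncomputable def lengthGF (R : Type*) [Semiring R] (k : ℕ) (S : Set AnyPerm) : R⟦X⟧ :=
  sizeGF R (fun p => k * p.1) S

/-- The set of involutions of all lengths. -/
def involutions : Set AnyPerm :=
  {p | p⁻¹ = p}

/-- A set `A` of permutations with finitely many simple members, closed under inversion, inflation
and passing to the blocks of inflations, together with a map `prof` that only depends on the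
profiles of the blocks when evaluated at an inflation of a simple permutation, and that determines
the profile of the inverse and whether a permutation is a sum or a skew sum. -/
structure IsProfiledClass {V : Type*} (A : Set AnyPerm) (prof : AnyPerm → V) : Prop where
  length_pos : ∀ p ∈ A, 0 < p.1
  inv_mem : ∀ p ∈ A, p⁻¹ ∈ A
  inflate_mem_iff : ∀ {m : ℕ} (σ : Perm m) (α : Fin m → AnyPerm), (∀ i, 0 < (α i).1) →
    (inflate σ α ∈ A ↔ (⟨m, σ⟩ : AnyPerm) ∈ A ∧ ∀ i, α i ∈ A)
  finite_isSimple : {p ∈ A | IsSimple p.2}.Finite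
  prof_inflate : ∀ {m : ℕ} (σ : Perm m) (α α' : Fin m → AnyPerm), IsSimple σ → 2 ≤ m →
    (∀ i, 0 < (α i).1) → (∀ i, 0 < (α' i).1) → (∀ i, prof (α i) = prof (α' i)) →
    prof (inflate σ α) = prof (inflate σ α')
  prof_inv : ∀ p p', prof p = prof p' → prof p⁻¹ = prof p'⁻¹
  isInflationOf_of_prof_eq : ∀ p p', prof p = prof p' → ∀ τ : Perm 2,
    IsInflationOf τ p → IsInflationOf τ p'

/-- The permutations whose substitution decomposition has quotient `σ` and blocks of
profiles `w`. -/
def typeClass {V : Type*} (prof : AnyPerm → V) {m : ℕ} (σ : Perm m) (w : Fin m → V) :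
    Set AnyPerm :=
  inflate σ '' {α | IsReducedInflation σ α ∧ prof ∘ α = w}

/-- The classes into which the involutions that are skew sums are divided: the involutions
`a ⊖ a⁻¹` by the profile of `a`, and the involutions `a ⊖ γ ⊖ a⁻¹` by the profiles of `a` and `γ`,
where `a` is skew indecomposable. -/
def skewClass {V : Type*} (prof : AnyPerm → V) : V ⊕ V × V → Set AnyPerm
  | .inl u => skewPair '' (skewIndecomposables ∩ prof ⁻¹' {u})
  | .inr (u, v) => skewTriple '' ((skewIndecomposables ∩ prof ⁻¹' {u}) ×ˢ
      {γ | 0 < γ.1 ∧ γ⁻¹ = γ ∧ prof γ = v})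

variable {R V : Type*} {A S : Set AnyPerm} {prof : AnyPerm → V} {k m m' : ℕ} {σ : Perm m}
  {σ' : Perm m'} {w : Fin m → V} {w' : Fin m' → V} {α α' : Fin m → AnyPerm} {p : AnyPerm}

lemma finite_preimage_length_Iic (n : ℕ) : (Sigma.fst ⁻¹' Set.Iic n : Set AnyPerm).Finite :=
  (Set.finite_Iic n).preimage' fun m _ => by
    rw [← Set.range_sigmaMk]
    exact Set.finite_range _

lemma finite_preimage_mul_length (hk : k ≠ 0) (n : ℕ) :
    ((fun p : AnyPerm => k * p.1) ⁻¹' {n}).Finite :=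
  (finite_preimage_length_Iic n).subset fun _ hp =>
    (Nat.le_mul_of_pos_left _ (Nat.pos_of_ne_zero hk)).trans_eq hp

lemma constantCoeff_lengthGF [Semiring R] (hk : k ≠ 0) (hS : ∀ p ∈ S, 0 < p.1) :
    constantCoeff (lengthGF R k S) = 0 :=
  constantCoeff_sizeGF fun p hp => mul_ne_zero hk (hS p hp).ne'

lemma injOn_inflate (σ : Perm m) : {α | IsReducedInflation σ α}.InjOn (inflate σ) :=
  fun α hα α' hα' h => by simpa using hα.unique hα' h

lemma eq_of_mem_typeClass (h : p ∈ typeClass prof σ w) (h' : p ∈ typeClass prof σ' w') :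
    (⟨m, σ, w⟩ : Σ m, Perm m × (Fin m → V)) = ⟨m', σ', w'⟩ := by
  obtain ⟨α, ⟨hα, rfl⟩, rfl⟩ := h
  obtain ⟨α', ⟨hα', rfl⟩, heq⟩ := h'
  cases hα.unique hα' heq.symm
  rfl

lemma typeClass_subset (σ : Perm m) (w : Fin m → V) : typeClass prof σ w ⊆ {p | 2 ≤ p.1} := by
  rintro _ ⟨α, ⟨hα, -⟩, rfl⟩
  exact hα.two_le_length_inflate

lemma pairwise_disjoint_skewClass (prof : AnyPerm → V) :
    Pairwise (Function.onFun Disjoint (skewClass prof)) := by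
  refine fun b c hbc => Set.disjoint_left.mpr fun p hb hc => hbc ?_
  match b, c, hb, hc with
  | .inl _, .inl _, hb, hc =>
    obtain ⟨a, ⟨ha, rfl⟩, rfl⟩ := hb
    obtain ⟨a', ⟨ha', rfl⟩, h⟩ := hc
    rw [injOn_skewPair ha' ha h]
  | .inl _, .inr _, ⟨a, ⟨ha, _⟩, h⟩, ⟨⟨a', γ⟩, ⟨⟨ha', _⟩, hγ, _⟩, h'⟩ =>
    exact absurd (h.trans h'.symm) (skewPair_ne_skewTriple ha ha' hγ)
  | .inr _, .inl _, ⟨⟨a', γ⟩, ⟨⟨ha', _⟩, hγ, _⟩, h'⟩, ⟨a, ⟨ha, _⟩, h⟩ =>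
    exact absurd (h.trans h'.symm) (skewPair_ne_skewTriple ha ha' hγ)
  | .inr (_, _), .inr (_, _), hb, hc =>
    obtain ⟨⟨a, γ⟩, ⟨⟨ha, rfl⟩, hγ, -, rfl⟩, rfl⟩ := hb
    obtain ⟨⟨a', γ'⟩, ⟨⟨ha', rfl⟩, hγ', -, rfl⟩, h⟩ := hc
    cases injOn_skewTriple ⟨ha', hγ'⟩ ⟨ha, hγ⟩ h
    rfl

lemma subset_iUnion_skewClass (prof : AnyPerm → V) :
    involutions ∩ {p | IsInflationOf (Equiv.swap 0 1 : Perm 2) p} ⊆ ⋃ b, skewClass prof b := by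
  rintro p ⟨hinv, hp⟩
  obtain ⟨a, ha, rfl | ⟨γ, hγ, hγinv, rfl⟩⟩ := eq_skewPair_or_eq_skewTriple hinv hp
  · exact Set.mem_iUnion.mpr ⟨.inl (prof a), a, ⟨ha, rfl⟩, rfl⟩
  · exact Set.mem_iUnion.mpr ⟨.inr (prof a, prof γ), (a, γ), ⟨⟨ha, rfl⟩, hγ, hγinv, rfl⟩, rfl⟩

lemma skewClass_subset (prof : AnyPerm → V) (b : V ⊕ V × V) :
    skewClass prof b ⊆ {p | IsInflationOf (Equiv.swap 0 1 : Perm 2) p} := by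
  match b with
  | .inl _ =>
    rintro _ ⟨a, ⟨ha, -⟩, rfl⟩
    exact isInflationOf_two_iff.mpr ⟨a, a⁻¹, ha.1, ha.1, rfl⟩
  | .inr _ =>
    rintro _ ⟨⟨a, γ⟩, ⟨⟨ha, -⟩, hγ, -⟩, rfl⟩
    exact isInflationOf_two_iff.mpr ⟨a, _, ha.1, length_skewSum_pos hγ, rfl⟩

namespace IsProfiledClass

variable (hA : IsProfiledClass A prof)
include hA

lemma lengthGF_mem_of_typeClass [CommSemiring R] [Finite V] {Z : Submodule R[X] R⟦X⟧}
    (hZ : 1 ≤ Z) (hS : S ⊆ A) (hk : k ≠ 0)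
    (h : ∀ {m : ℕ} (σ : Perm m) (α : Fin m → AnyPerm), IsReducedInflation σ α → inflate σ α ∈ S →
      lengthGF R k (S ∩ typeClass prof σ (prof ∘ α)) ∈ Z) :
    lengthGF R k S ∈ Z := by
  have := hA.finite_isSimple.to_subtype
  have hpiece {m : ℕ} (σ : Perm m) (w : Fin m → V) (p) (hp : p ∈ S ∩ typeClass prof σ w) :
      lengthGF R k (S ∩ {p | 2 ≤ p.1} ∩ typeClass prof σ w) ∈ Z := by
    obtain ⟨hpS, α, ⟨hα, rfl⟩, rfl⟩ := hp
    rw [Set.inter_assoc, Set.inter_eq_right.mpr (typeClass_subset σ _)]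
    exact h σ α hα hpS
  refine sizeGF_mem_of_inter_diff (Z := Z.toAddSubmonoid) (finite_preimage_mul_length hk)
    {p | 2 ≤ p.1} ?_ (hZ (sizeGF_mem_one_of_finite ?_))
  · refine sizeGF_mem_of_cover (finite_preimage_mul_length hk)
      (T := fun b : Σ s : {p ∈ A | IsSimple p.2}, (Fin s.1.1 → V) => typeClass prof b.1.1.2 b.2)
      ?_ ?_ ?_
    · rintro ⟨⟨⟨m, σ⟩, hσ⟩, w⟩ ⟨⟨⟨m', σ'⟩, hσ'⟩, w'⟩ hne
      refine Set.disjoint_left.mpr fun p hp hp' => hne ?_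
      cases eq_of_mem_typeClass hp hp'
      rfl
    · rintro p ⟨hpS, hp⟩
      obtain ⟨m, σ, α, hα, rfl⟩ := exists_isReducedInflation hp
      have hσ := ((hA.inflate_mem_iff σ α hα.pos).mp (hS hpS)).1
      exact Set.mem_iUnion.mpr ⟨⟨⟨⟨m, σ⟩, hσ, hα.isSimple⟩, prof ∘ α⟩, α, ⟨hα, rfl⟩, rfl⟩
    · exact fun b p hp => hpiece b.1.1.2 b.2 p ⟨hp.1.1, hp.2⟩
  · exact (finite_preimage_length_Iic 1).subset fun p hp => Nat.le_of_lt_succ (not_le.mp hp.2)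

lemma isReducedInflation_of_prof_eq (h : IsReducedInflation σ α) (hα' : ∀ i, α' i ∈ A)
    (hp : ∀ i, prof (α' i) = prof (α i)) : IsReducedInflation σ α' := by
  refine ⟨h.isSimple, h.two_le, fun i => hA.length_pos _ (hα' i), ?_⟩
  rintro rfl i hi hinf
  exact h.not_isInflationOf rfl i hi (hA.isInflationOf_of_prof_eq _ _ (hp i) _ hinf)

lemma inter_typeClass (h : IsReducedInflation σ α) (hmem : inflate σ α ∈ A) :
    A ∩ prof ⁻¹' {prof (inflate σ α)} ∩ typeClass prof σ (prof ∘ α) =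
      inflate σ '' Set.univ.pi fun i => A ∩ prof ⁻¹' {prof (α i)} := by
  have hσ := ((hA.inflate_mem_iff σ α h.pos).mp hmem).1
  refine Set.Subset.antisymm ?_ ?_
  · rintro _ ⟨⟨hA', -⟩, β, ⟨hβ, hprof⟩, rfl⟩
    exact ⟨β, fun i _ => ⟨((hA.inflate_mem_iff σ β hβ.pos).mp hA').2 i, congrFun hprof i⟩, rfl⟩
  · rintro _ ⟨β, hβ, rfl⟩
    have hβ' := hA.isReducedInflation_of_prof_eq h (fun i => (hβ i trivial).1) fun i =>
      (hβ i trivial).2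
    exact ⟨⟨(hA.inflate_mem_iff σ β hβ'.pos).mpr ⟨hσ, fun i => (hβ i trivial).1⟩,
      hA.prof_inflate σ β α h.isSimple h.two_le hβ'.pos h.pos fun i => (hβ i trivial).2⟩,
      β, ⟨hβ', funext fun i => (hβ i trivial).2⟩, rfl⟩

lemma pi_subset_isReducedInflation (h : IsReducedInflation σ α) :
    (Set.univ.pi fun i => A ∩ prof ⁻¹' {prof (α i)}) ⊆ {β | IsReducedInflation σ β} :=
  fun _ hβ => hA.isReducedInflation_of_prof_eq h (fun i => (hβ i trivial).1) fun i =>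
    (hβ i trivial).2

theorem lengthGF_two_mem [CommSemiring R] [Finite V] {J : Submodule R[X] R⟦X⟧} (hJ : J * J ≤ J)
    (hG : ∀ v, lengthGF R 2 (A ∩ prof ⁻¹' {v}) ∈ J) (v : V) :
    lengthGF R 2 (A ∩ prof ⁻¹' {v}) ∈ 1 ⊔ J * J := by
  refine hA.lengthGF_mem_of_typeClass le_sup_left Set.inter_subset_left two_ne_zero ?_
  rintro m σ α hα ⟨hmem, rfl⟩
  have : Nontrivial (Fin m) := Fin.nontrivial_iff_two_le.mpr hα.two_le
  refine Submodule.mem_sup_right ?_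
  rw [hA.inter_typeClass hα hmem, lengthGF,
    sizeGF_image ((injOn_inflate σ).mono (hA.pi_subset_isReducedInflation hα))
      (s := fun β => ∑ i, 2 * (β i).1) fun β _ => by rw [length_inflate, Finset.mul_sum],
    sizeGF_pi fun _ => finite_preimage_mul_length two_ne_zero]
  exact prod_mem_mul_self hJ fun i => hG (prof (α i))

lemma inter_involutions_inter_typeClass (h : IsReducedInflation σ α) (hmem : inflate σ α ∈ A)
    (hinv : (inflate σ α)⁻¹ = inflate σ α) (hσ : (⟨m, σ⟩ : AnyPerm) ≠ ⟨2, Equiv.swap 0 1⟩) :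
    A ∩ prof ⁻¹' {prof (inflate σ α)} ∩ involutions ∩ typeClass prof σ (prof ∘ α) =
      inflate σ '' {β | (∀ i, β (σ i) = (β i)⁻¹) ∧ ∀ i, β i ∈ A ∩ prof ⁻¹' {prof (α i)}} := by
  rw [Set.inter_right_comm, hA.inter_typeClass h hmem, ← Set.image_inter_preimage]
  congr 1
  ext β
  have key (hβ : ∀ i, β i ∈ A ∩ prof ⁻¹' {prof (α i)}) :
      inflate σ β ∈ involutions ↔ ∀ i, β (σ i) = (β i)⁻¹ :=
    ((hA.pi_subset_isReducedInflation h fun i _ => hβ i).inv_inflate_eq_iff hσ).trans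
      (and_iff_right ((h.inv_inflate_eq_iff hσ).mp hinv).1)
  simp only [Set.mem_inter_iff, Set.mem_univ_pi, Set.mem_preimage, Set.mem_ofPred_eq] at key ⊢
  exact ⟨fun hβ => ⟨(key hβ.1).mp hβ.2, hβ.1⟩, fun hβ => ⟨hβ.2, (key hβ.2).mpr hβ.1⟩⟩

lemma lengthGF_one_inter_typeClass_mem [CommSemiring R] {J : Submodule R[X] R⟦X⟧}
    (hJ : J * J ≤ J) (hG : ∀ v, lengthGF R 2 (A ∩ prof ⁻¹' {v}) ∈ J)
    (hH : ∀ v, lengthGF R 1 (A ∩ prof ⁻¹' {v} ∩ involutions) ∈ J)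
    (h : IsReducedInflation σ α) (hmem : inflate σ α ∈ A)
    (hinv : (inflate σ α)⁻¹ = inflate σ α) (hσ : (⟨m, σ⟩ : AnyPerm) ≠ ⟨2, Equiv.swap 0 1⟩) :
    lengthGF R 1 (A ∩ prof ⁻¹' {prof (inflate σ α)} ∩ involutions ∩
      typeClass prof σ (prof ∘ α)) ∈ J * J := by
  obtain ⟨hσinv, hα⟩ := (h.inv_inflate_eq_iff hσ).mp hinv
  have hinvol : Function.Involutive σ := fun i =>
    (Equiv.Perm.inv_eq_iff_eq.mp (DFunLike.congr_fun hσinv i)).symm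
  have : Nontrivial {i // i ≤ σ i} := nontrivial_le_apply hinvol
    (by simpa only [Fintype.card_fin] using h.two_le)
    fun hm => eq_one_of_sigma_ne_swap (by simpa only [Fintype.card_fin] using hm) hσ
  have hS (i) : ∀ p ∈ A ∩ prof ⁻¹' {prof (α i)}, p⁻¹ ∈ A ∩ prof ⁻¹' {prof (α (σ i))} :=
    fun p hp => ⟨hA.inv_mem p hp.1, by
      rw [Set.mem_preimage, hα]
      exact hA.prof_inv _ _ hp.2⟩
  rw [hA.inter_involutions_inter_typeClass h hmem hinv hσ, lengthGF,
    sizeGF_image (s := fun β => ∑ i, (β i).1)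
      ((injOn_inflate σ).mono fun β hβ => hA.pi_subset_isReducedInflation h fun i _ => hβ.2 i)
      fun β _ => by rw [length_inflate, one_mul],
    sizeGF_pi_of_involutive hinvol (fun _ => rfl) (fun _ _ => (finite_preimage_mul_length · _)) hS]
  refine prod_mem_mul_self hJ fun i => ?_
  by_cases hi : σ i = i.1
  · convert hH (prof (α i)) using 1
    simp only [orbitCard, hi, if_true, forall_const]
    rfl
  · convert hG (prof (α i)) using 1
    simp only [orbitCard, hi, if_false, false_imp_iff, and_true]
    rfl

lemma prof_skewSum {a b c d : AnyPerm} (ha : 0 < a.1) (hb : 0 < b.1) (hc : 0 < c.1)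
    (hd : 0 < d.1) (hac : prof a = prof c) (hbd : prof b = prof d) :
    prof (skewSum a b) = prof (skewSum c d) :=
  hA.prof_inflate _ _ _ (isSimple_two _) le_rfl (Fin.forall_fin_two.mpr ⟨ha, hb⟩)
    (Fin.forall_fin_two.mpr ⟨hc, hd⟩) (Fin.forall_fin_two.mpr ⟨hac, hbd⟩)

lemma skewSum_mem_iff {a b : AnyPerm} (ha : 0 < a.1) (hb : 0 < b.1) :
    skewSum a b ∈ A ↔ (⟨2, Equiv.swap 0 1⟩ : AnyPerm) ∈ A ∧ a ∈ A ∧ b ∈ A :=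
  (hA.inflate_mem_iff _ _ (Fin.forall_fin_two.mpr ⟨ha, hb⟩)).trans
    (and_congr_right' Fin.forall_fin_two)

lemma mem_skewIndecomposables_of_prof_eq {a b : AnyPerm} (ha : a ∈ skewIndecomposables)
    (hb : b ∈ A) (h : prof b = prof a) : b ∈ skewIndecomposables :=
  ⟨hA.length_pos b hb, fun hinf => ha.2 (hA.isInflationOf_of_prof_eq b a h _ hinf)⟩

lemma inter_skewClass_inl {a : AnyPerm} (ha : a ∈ skewIndecomposables) (hmem : skewPair a ∈ A) :
    A ∩ prof ⁻¹' {prof (skewPair a)} ∩ involutions ∩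
      skewClass prof (.inl (prof a)) =
      skewPair '' (A ∩ prof ⁻¹' {prof a}) := by
  have hswap := ((hA.skewSum_mem_iff ha.1 (b := a⁻¹) ha.1).mp hmem).1
  refine Set.Subset.antisymm ?_ ?_
  · rintro _ ⟨⟨⟨hb', -⟩, -⟩, b, ⟨hb, hprof⟩, rfl⟩
    exact ⟨b, ⟨((hA.skewSum_mem_iff hb.1 (b := b⁻¹) hb.1).mp hb').2.1, hprof⟩, rfl⟩
  · rintro _ ⟨b, ⟨hb, hprof⟩, rfl⟩
    have hb' := hA.mem_skewIndecomposables_of_prof_eq ha hb hprof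
    exact ⟨⟨⟨(hA.skewSum_mem_iff hb'.1 (b := b⁻¹) hb'.1).mpr ⟨hswap, hb, hA.inv_mem b hb⟩,
      hA.prof_skewSum (b := b⁻¹) (d := a⁻¹) hb'.1 hb'.1 ha.1 ha.1 hprof (hA.prof_inv _ _ hprof)⟩,
      inv_skewPair b⟩, b, ⟨hb', hprof⟩, rfl⟩

lemma skewTriple_mem_iff {a γ : AnyPerm} (ha : 0 < a.1) (hγ : 0 < γ.1) :
    skewTriple (a, γ) ∈ A ↔ (⟨2, Equiv.swap 0 1⟩ : AnyPerm) ∈ A ∧ a ∈ A ∧ γ ∈ A := by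
  rw [skewTriple, hA.skewSum_mem_iff ha (length_skewSum_pos hγ),
    hA.skewSum_mem_iff hγ (b := a⁻¹) ha]
  exact ⟨fun ⟨h, ha, _, hγ, _⟩ => ⟨h, ha, hγ⟩, fun ⟨h, ha, hγ⟩ => ⟨h, ha, h, hγ, hA.inv_mem a ha⟩⟩

lemma inter_skewClass_inr {a γ : AnyPerm} (ha : a ∈ skewIndecomposables) (hγ : 0 < γ.1)
    (hmem : skewTriple (a, γ) ∈ A) :
    A ∩ prof ⁻¹' {prof (skewTriple (a, γ))} ∩ involutions ∩
      skewClass prof (.inr (prof a, prof γ)) =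
      skewTriple '' ((A ∩ prof ⁻¹' {prof a}) ×ˢ (A ∩ prof ⁻¹' {prof γ} ∩ involutions)) := by
  have hswap := ((hA.skewTriple_mem_iff ha.1 hγ).mp hmem).1
  refine Set.Subset.antisymm ?_ ?_
  · rintro _ ⟨⟨⟨hbδ, -⟩, -⟩, ⟨b, δ⟩, ⟨⟨hb, hprof⟩, hδ, hinv, hprof'⟩, rfl⟩
    obtain ⟨-, hb', hδ'⟩ := (hA.skewTriple_mem_iff hb.1 hδ).mp hbδ
    exact ⟨(b, δ), ⟨⟨hb', hprof⟩, ⟨hδ', hprof'⟩, hinv⟩, rfl⟩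
  · rintro _ ⟨⟨b, δ⟩, ⟨⟨hb, hprof⟩, ⟨hδ, hprof'⟩, hinv⟩, rfl⟩
    have hb' := hA.mem_skewIndecomposables_of_prof_eq ha hb hprof
    have hδ' := hA.length_pos δ hδ
    have hprof_inner : prof (skewSum δ b⁻¹) = prof (skewSum γ a⁻¹) :=
      hA.prof_skewSum (b := b⁻¹) (d := a⁻¹) hδ' hb'.1 hγ ha.1 hprof' (hA.prof_inv _ _ hprof)
    exact ⟨⟨⟨(hA.skewTriple_mem_iff hb'.1 hδ').mpr ⟨hswap, hb, hδ⟩,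
      hA.prof_skewSum hb'.1 (length_skewSum_pos hδ') ha.1 (length_skewSum_pos hγ) hprof
        hprof_inner⟩, inv_skewTriple hb'.1 hδ' hinv⟩,
      (b, δ), ⟨⟨hb', hprof⟩, hδ', hinv, hprof'⟩, rfl⟩

theorem lengthGF_one_inter_isInflationOf_mem [CommSemiring R] [Finite V]
    {J : Submodule R[X] R⟦X⟧} (hJ : J * J ≤ J) (hG : ∀ v, lengthGF R 2 (A ∩ prof ⁻¹' {v}) ∈ J)
    (hH : ∀ v, lengthGF R 1 (A ∩ prof ⁻¹' {v} ∩ involutions) ∈ J) (v : V) :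
    lengthGF R 1 (A ∩ prof ⁻¹' {v} ∩ involutions ∩
      {p | IsInflationOf (Equiv.swap 0 1 : Perm 2) p}) ∈ 1 ⊔ J * J := by
  refine sizeGF_mem_of_cover (Z := (1 ⊔ J * J).toAddSubmonoid)
    (finite_preimage_mul_length one_ne_zero) (pairwise_disjoint_skewClass prof)
    ((Set.inter_subset_inter_left _ Set.inter_subset_right).trans
      (subset_iUnion_skewClass prof)) fun b p hp => ?_
  rw [Set.inter_assoc, Set.inter_eq_right.mpr (skewClass_subset prof b)] at hp ⊢
  match b, hp with
  | .inl _, ⟨⟨⟨hmem, hv⟩, _⟩, a, ⟨ha, hu⟩, heq⟩ =>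
    subst heq hv hu
    rw [hA.inter_skewClass_inl ha hmem, sizeGF_image (s := fun a => 2 * a.1) _
      fun a _ => by rw [length_skewPair, one_mul]]
    · exact hA.lengthGF_two_mem hJ hG (prof a)
    · exact injOn_skewPair.mono fun b hb => hA.mem_skewIndecomposables_of_prof_eq ha hb.1 hb.2
  | .inr (_, _), ⟨⟨⟨hmem, hv⟩, _⟩, ⟨a, γ⟩, ⟨⟨ha, hu⟩, hγ, _, hu'⟩, heq⟩ =>
    subst heq hv hu hu'
    refine Submodule.mem_sup_right ?_
    rw [hA.inter_skewClass_inr ha hγ hmem, sizeGF_image (s := fun x => 2 * x.1.1 + 1 * x.2.1) _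
      fun x _ => by rw [length_skewTriple, one_mul, one_mul],
      sizeGF_prod (finite_preimage_mul_length two_ne_zero) (finite_preimage_mul_length one_ne_zero)]
    · exact Submodule.mul_mem_mul (hG (prof a)) (hH (prof γ))
    · exact injOn_skewTriple.mono (Set.prod_mono
        (fun b hb => hA.mem_skewIndecomposables_of_prof_eq ha hb.1 hb.2)
        fun δ hδ => hA.length_pos δ hδ.1.1)

theorem lengthGF_one_mem [CommSemiring R] [Finite V] {J : Submodule R[X] R⟦X⟧} (hJ : J * J ≤ J)
    (hG : ∀ v, lengthGF R 2 (A ∩ prof ⁻¹' {v}) ∈ J)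
    (hH : ∀ v, lengthGF R 1 (A ∩ prof ⁻¹' {v} ∩ involutions) ∈ J) (v : V) :
    lengthGF R 1 (A ∩ prof ⁻¹' {v} ∩ involutions) ∈ 1 ⊔ J * J := by
  refine sizeGF_mem_of_inter_diff (Z := (1 ⊔ J * J).toAddSubmonoid)
    (finite_preimage_mul_length one_ne_zero) {p | IsInflationOf (Equiv.swap 0 1 : Perm 2) p}
    (hA.lengthGF_one_inter_isInflationOf_mem hJ hG hH v) ?_
  refine hA.lengthGF_mem_of_typeClass le_sup_left (fun p hp => hp.1.1.1) one_ne_zero ?_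
  rintro m σ α hα ⟨⟨⟨hmem, rfl⟩, hinv⟩, hskew⟩
  have hσ : (⟨m, σ⟩ : AnyPerm) ≠ ⟨2, Equiv.swap 0 1⟩ := by
    rintro ⟨⟩
    exact hskew (isInflationOf_iff.mpr ⟨α, hα.pos, rfl⟩)
  rw [Set.sdiff_inter_right_comm, (Set.disjoint_left.mpr _).sdiff_eq_left]
  · exact Submodule.mem_sup_right
      (hA.lengthGF_one_inter_typeClass_mem hJ hG hH hα hmem hinv hσ)
  · rintro _ ⟨-, β, ⟨hβ, -⟩, rfl⟩
    rw [Set.mem_ofPred_eq, isInflationOf_inflate_iff hβ.isSimple hβ.two_le hβ.pos (isSimple_two _)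
      le_rfl]
    exact hσ

theorem isAlgebraic_lengthGF_singleton [CommRing R] [IsDomain R] [Finite V] (v : V) :
    IsAlgebraic R[X] (lengthGF R 1 (A ∩ prof ⁻¹' {v} ∩ involutions)) := by
  let G : V → R⟦X⟧ := fun v => lengthGF R 2 (A ∩ prof ⁻¹' {v})
  let H : V → R⟦X⟧ := fun v => lengthGF R 1 (A ∩ prof ⁻¹' {v} ∩ involutions)
  let I : Ideal R⟦X⟧ := RingHom.ker PowerSeries.constantCoeff
  let J := adjoinInf R[X] (Set.range (Sum.elim G H)) I
  have hJ : J * J ≤ J := adjoinInf_mul_le _ I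
  have hG (v) : G v ∈ J := ⟨Algebra.subset_adjoin ⟨.inl v, rfl⟩,
    constantCoeff_lengthGF two_ne_zero fun p hp => hA.length_pos p hp.1⟩
  have hH (v) : H v ∈ J := ⟨Algebra.subset_adjoin ⟨.inr v, rfl⟩,
    constantCoeff_lengthGF one_ne_zero fun p hp => hA.length_pos p hp.1.1⟩
  have : FaithfulSMul R[X] R⟦X⟧ :=
    (faithfulSMul_iff_algebraMap_injective _ _).mpr (Polynomial.coe_injective R)
  refine isAlgebraic_of_mem_one_sup_adjoinInf_mul (Set.finite_range _)
    (RingHom.ker_ne_top (PowerSeries.constantCoeff (R := R))) ?_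
    (⟨.inr v, rfl⟩ : H v ∈ Set.range (Sum.elim G H))
  rintro _ ⟨u | u, rfl⟩
  · exact hA.lengthGF_two_mem hJ hG u
  · exact hA.lengthGF_one_mem hJ hG hH u

theorem isAlgebraic_lengthGF [CommRing R] [IsDomain R] [Finite V] (W : Set V) :
    IsAlgebraic R[X] (lengthGF R 1 (A ∩ prof ⁻¹' W ∩ involutions)) := by
  refine sizeGF_mem_of_cover (Z := (Subalgebra.algebraicClosure R[X] R⟦X⟧).toAddSubmonoid)
    (finite_preimage_mul_length one_ne_zero) (T := fun v => prof ⁻¹' {v})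
    (fun u v huv => (Set.disjoint_singleton.mpr huv).preimage prof)
    (fun p _ => Set.mem_iUnion.mpr ⟨prof p, rfl⟩) ?_
  rintro _ p ⟨⟨⟨-, hW⟩, -⟩, rfl⟩
  have heq : A ∩ prof ⁻¹' W ∩ involutions ∩ prof ⁻¹' {prof p} =
      A ∩ prof ⁻¹' {prof p} ∩ involutions := by
    rw [Set.inter_right_comm, Set.inter_assoc A, ← Set.preimage_inter,
      Set.inter_eq_right.mpr (Set.singleton_subset_iff.mpr (Set.mem_preimage.mp hW))]
  rw [heq]
  exact hA.isAlgebraic_lengthGF_singleton (prof p)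

end IsProfiledClass

end ProfiledClass

section Application

/-- The nonempty permutations in a family of sets of permutations of each length. -/
def members (S : ∀ n, Set (Perm n)) : Set AnyPerm :=
  {p | 0 < p.1 ∧ p.2 ∈ S p.1}

/-- The members of a class whose inverses also belong to it. -/
def symmPart (C : ∀ n, Set (Perm n)) : Set AnyPerm :=
  {p | p ∈ members C ∧ p⁻¹ ∈ members C}

/-- The properties of a permutation and of its inverse, along with the `τ ∈ {12, 21}` of which it
is an inflation. -/
def profile (Ps : Set (∀ n, Set (Perm n))) (p : AnyPerm) : Set Ps × Set Ps × Set (Perm 2) :=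
  ({P | p.2 ∈ P.1 p.1}, {P | p⁻¹.2 ∈ P.1 p⁻¹.1}, {τ | IsInflationOf τ p})

variable {C : ∀ n, Set (Perm n)} {Ps : Set (∀ n, Set (Perm n))} {m : ℕ} {p p' : AnyPerm}

lemma contains_inflate {n : ℕ} {σ : Perm m} {α : Fin m → AnyPerm} {τ : Perm n}
    (f : Fin n → Σ i, Fin (α i).1)
    (hpos : ∀ s t, s < t → inflationPos α (f s) < inflationPos α (f t))
    (hval : ∀ s t, inflationVal σ α (f s) < inflationVal σ α (f t) ↔ τ s < τ t) :
    Contains τ (inflate σ α).2 := by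
  obtain ⟨e, heu, hev⟩ := isStandardization_inflate σ α
  refine ⟨fun s => e.symm (f s), fun s t hst => (heu _ _).mp ?_, fun s t => ?_⟩
  · simpa only [Equiv.apply_symm_apply] using hpos s t hst
  · simpa only [← hev, Equiv.apply_symm_apply] using hval s t

lemma contains_inflate_block (σ : Perm m) (α : Fin m → AnyPerm) (i : Fin m) :
    Contains (α i).2 (inflate σ α).2 :=
  contains_inflate (fun s => ⟨i, s⟩)
    (fun s t hst => by simpa [inflationPos, Prod.Lex.toLex_lt_toLex] using hst)
    fun s t => by simp [inflationVal, Prod.Lex.toLex_lt_toLex]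

lemma contains_inflate_quotient (σ : Perm m) {α : Fin m → AnyPerm} (hα : ∀ i, 0 < (α i).1) :
    Contains σ (inflate σ α).2 := by
  refine contains_inflate (fun i => ⟨i, ⟨0, hα i⟩⟩)
    (fun s t hst => by simp [inflationPos, Prod.Lex.toLex_lt_toLex, hst]) fun s t => ?_
  simp only [inflationVal, Prod.Lex.toLex_lt_toLex, EmbeddingLike.apply_eq_iff_eq]
  refine or_iff_left ?_
  rintro ⟨rfl, h⟩
  exact lt_irrefl _ h

lemma inflate_mem_members_iff (hC : IsPermClass C) (hwc : WreathClosed C) (σ : Perm m)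
    (α : Fin m → AnyPerm) (hα : ∀ i, 0 < (α i).1) :
    inflate σ α ∈ members C ↔ (⟨m, σ⟩ : AnyPerm) ∈ members C ∧ ∀ i, α i ∈ members C := by
  have hpos : 0 < (inflate σ α).1 ↔ 0 < m := by
    rw [length_inflate, Finset.sum_pos_iff]
    exact ⟨fun ⟨i, _⟩ => i.pos, fun hm => ⟨⟨0, hm⟩, Finset.mem_univ _, hα _⟩⟩
  have hmem : (inflate σ α).2 ∈ C (inflate σ α).1 ↔ σ ∈ C m ∧ ∀ i, (α i).2 ∈ C (α i).1 :=
    ⟨fun h => ⟨hC _ _ h (contains_inflate_quotient σ hα),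
      fun i => hC _ _ h (contains_inflate_block σ α i)⟩,
      fun h => hwc σ _ _ _ h.1 h.2 (isInflation_inflate σ α hα)⟩
  simp only [members, Set.mem_ofPred_eq, hpos, hmem, hα, true_and, and_assoc]

lemma inflate_mem_symmPart_iff (hC : IsPermClass C) (hwc : WreathClosed C) (σ : Perm m)
    (α : Fin m → AnyPerm) (hα : ∀ i, 0 < (α i).1) :
    inflate σ α ∈ symmPart C ↔ (⟨m, σ⟩ : AnyPerm) ∈ symmPart C ∧ ∀ i, α i ∈ symmPart C := by
  have hinv : (inflate σ α)⁻¹ ∈ members C ↔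
      (⟨m, σ⟩ : AnyPerm)⁻¹ ∈ members C ∧ ∀ i, (α i)⁻¹ ∈ members C := by
    rw [inv_inflate, inflate_mem_members_iff hC hwc σ⁻¹ (fun i => (α (σ⁻¹ i))⁻¹)
      fun i => hα (σ⁻¹ i)]
    exact and_congr_right' (σ⁻¹.forall_congr_right (q := fun i => (α i)⁻¹ ∈ members C))
  simp only [symmPart, Set.mem_ofPred_eq, inflate_mem_members_iff hC hwc σ α hα, hinv,
    forall_and]
  exact and_and_and_comm

lemma QueryComplete.inflate_mem_iff (hqc : QueryComplete Ps) (σ : Perm m)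
    {α α' : Fin m → AnyPerm} (hα : ∀ i, 0 < (α i).1) (hα' : ∀ i, 0 < (α' i).1)
    (h : ∀ i, ∀ Q ∈ Ps, (α i).2 ∈ Q (α i).1 ↔ (α' i).2 ∈ Q (α' i).1) {P} (hP : P ∈ Ps) :
    (inflate σ α).2 ∈ P (inflate σ α).1 ↔ (inflate σ α').2 ∈ P (inflate σ α').1 :=
  hqc σ _ _ _ _ h P hP _ _ (isInflation_inflate σ α hα) (isInflation_inflate σ α' hα')

lemma profile_eq_iff : profile Ps p = profile Ps p' ↔
    (∀ P ∈ Ps, p.2 ∈ P p.1 ↔ p'.2 ∈ P p'.1) ∧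
      (∀ P ∈ Ps, p⁻¹.2 ∈ P p⁻¹.1 ↔ p'⁻¹.2 ∈ P p'⁻¹.1) ∧
      ∀ τ : Perm 2, IsInflationOf τ p ↔ IsInflationOf τ p' := by
  simp only [profile, Prod.mk.injEq, Set.ext_iff, Subtype.forall, Set.mem_ofPred_eq]

lemma isInflationOf_inv_right_iff (τ : Perm 2) : IsInflationOf τ p⁻¹ ↔ IsInflationOf τ p := by
  have hτ : τ⁻¹ = τ := by decide +revert
  rw [← isInflationOf_inv_iff, inv_inv, hτ]

lemma profile_inflate_eq (hqc : QueryComplete Ps) {σ : Perm m} {α α' : Fin m → AnyPerm}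
    (hσ : IsSimple σ) (hm : 2 ≤ m) (hα : ∀ i, 0 < (α i).1) (hα' : ∀ i, 0 < (α' i).1)
    (h : ∀ i, profile Ps (α i) = profile Ps (α' i)) :
    profile Ps (inflate σ α) = profile Ps (inflate σ α') := by
  simp only [profile_eq_iff] at h
  refine profile_eq_iff.mpr ⟨fun P hP => hqc.inflate_mem_iff σ hα hα' (fun i => (h i).1) hP,
    fun P hP => ?_, fun τ => ?_⟩
  · rw [inv_inflate, inv_inflate]
    exact hqc.inflate_mem_iff σ⁻¹ (α := fun i => (α (σ⁻¹ i))⁻¹) (α' := fun i => (α' (σ⁻¹ i))⁻¹)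
      (fun i => hα (σ⁻¹ i)) (fun i => hα' (σ⁻¹ i)) (fun i => (h (σ⁻¹ i)).2.1) hP
  · rw [isInflationOf_inflate_iff hσ hm hα (isSimple_two τ) le_rfl,
      isInflationOf_inflate_iff hσ hm hα' (isSimple_two τ) le_rfl]

theorem isProfiledClass_symmPart (hC : IsPermClass C) (hwc : WreathClosed C)
    (hfin : FinitelyManySimples C) (hqc : QueryComplete Ps) :
    IsProfiledClass (symmPart C) (profile Ps) where
  length_pos _ hp := hp.1.1
  inv_mem _ hp := ⟨hp.2, hp.1⟩
  inflate_mem_iff := inflate_mem_symmPart_iff hC hwc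
  finite_isSimple := hfin.subset fun _ hp => ⟨hp.1.1.2, hp.2⟩
  prof_inflate _ _ _ hσ hm hα hα' h := profile_inflate_eq hqc hσ hm hα hα' h
  prof_inv p p' h := by
    simp only [profile_eq_iff, isInflationOf_inv_right_iff] at h ⊢
    exact ⟨h.2.1, h.1, h.2.2⟩
  isInflationOf_of_prof_eq _ _ h τ := ((profile_eq_iff.mp h).2.2 τ).mp

lemma genFun_eq_lengthGF (S : ∀ n, Set (Perm n)) : genFun S = lengthGF ℚ 1 (members S) := by
  ext n
  have hset (hn : 0 < n) : {p ∈ members S | 1 * p.1 = n} = Sigma.mk n '' S n := by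
    ext ⟨k, π⟩
    simp only [members, Set.mem_ofPred_eq, one_mul]
    refine ⟨?_, ?_⟩
    · rintro ⟨⟨-, hπ⟩, rfl⟩
      exact ⟨π, hπ, rfl⟩
    · rintro ⟨π', hπ', ⟨⟩⟩
      exact ⟨⟨hn, hπ'⟩, rfl⟩
  rw [lengthGF, coeff_sizeGF, genFun, PowerSeries.coeff_mk]
  rcases n.eq_zero_or_pos with rfl | hn
  · have hempty : {p ∈ members S | 1 * p.1 = 0} = ∅ :=
      Set.eq_empty_of_forall_notMem fun p hp => hp.1.1.ne' ((one_mul _).symm.trans hp.2)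
    rw [if_pos rfl, hempty, Set.ncard_empty, Nat.cast_zero]
  · rw [if_neg hn.ne', hset hn, Set.ncard_image_of_injective _ sigma_mk_injective,
      Nat.card_coe_set_eq]

lemma mem_involutions_iff : p ∈ involutions ↔ p.2⁻¹ = p.2 :=
  Sigma.mk.inj_iff.trans ((and_iff_right rfl).trans heq_iff_eq)

lemma members_setOf_eq {Qs : Set (∀ n, Set (Perm n))} (hQs : Qs ⊆ Ps) :
    (members fun n => {π : Perm n | π ∈ C n ∧ π⁻¹ = π ∧ ∀ P ∈ Qs, π ∈ P n}) =
      symmPart C ∩ profile Ps ⁻¹' {v | ∀ P (hP : P ∈ Qs), ⟨P, hQs hP⟩ ∈ v.1} ∩ involutions := by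
  ext p
  refine ⟨?_, ?_⟩
  · rintro ⟨hpos, hmem, hinv, hQ⟩
    have hp : p⁻¹ = p := mem_involutions_iff.mpr hinv
    exact ⟨⟨⟨⟨hpos, hmem⟩, hp.symm ▸ ⟨hpos, hmem⟩⟩, hQ⟩, hp⟩
  · rintro ⟨⟨⟨⟨hpos, hmem⟩, -⟩, hQ⟩, hp⟩
    exact ⟨hpos, hmem, mem_involutions_iff.mp hp, hQ⟩

lemma isAlgebraicOverQx_iff {f : PowerSeries ℚ} :
    IsAlgebraicOverQx f ↔ IsAlgebraic (Polynomial ℚ) f :=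
  Iff.rfl

end Application

/-- Let `C` be a wreath-closed permutation class containing only finitely many simple
permutations, `Ps` a finite query-complete set of properties, and `Qs ⊆ Ps`.  Then the
generating function of the set of involutions in `C` satisfying every property in `Qs`
is algebraic over `ℚ[x]`. -/
theorem statement7 (C : ∀ n, Set (Perm n)) (hC : IsPermClass C) (hwc : WreathClosed C)
    (hfin : FinitelyManySimples C)
    (Ps : Set (∀ n, Set (Perm n))) (hPs : Ps.Finite) (hqc : QueryComplete Ps)
    (Qs : Set (∀ n, Set (Perm n))) (hQs : Qs ⊆ Ps) :
    IsAlgebraicOverQx (genFun fun n =>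
      {π : Perm n | π ∈ C n ∧ π⁻¹ = π ∧ ∀ P ∈ Qs, π ∈ P n}) := by
  have := hPs.to_subtype
  rw [isAlgebraicOverQx_iff, genFun_eq_lengthGF, members_setOf_eq hQs]
  exact (isProfiledClass_symmPart hC hwc hfin hqc).isAlgebraic_lengthGF _
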